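/- There exist absolute constants c, C > 0 such that the following holds. Let x be sufficiently large, let 2 ≤ a ≤ x^{1/30} and 2 ≤ z ≤ x^{1/30}, suppose a ∈ 𝓜 and P⁺(a) ≤ z, and let W_a(x,z) = #{n ≤ x : a | (n²+1) and P⁻((n²+1)/a) > z}. Then c · 2^{ω(a)}·x/(φ(a)·log z) ≤ W_a(x,z) ≤ C · 2^{ω(a)}·x/(φ(a)·log z). -/

import Mathlib

section PA

/-- weighted sum over subsets with weights depending on the cardinality -/
noncomputable def pp (T : Finset ℕ) (c : ℕ → ℝ) (g : ℕ → ℝ) : ℝ :=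
  ∑ D ∈ T.powerset, c D.card * ∏ p ∈ D, g p

/-- indicator of a single cardinality -/
noncomputable def dl (k : ℕ) : ℕ → ℝ := fun i => if i = k then 1 else 0

/-- truncated alternating signs -/
noncomputable def yc (k : ℕ) : ℕ → ℝ := fun i => if i ≤ k then (-1) ^ i else 0

lemma pp_empty (c g : ℕ → ℝ) : pp ∅ c g = c 0 := by simp [pp]

lemma pp_insert {T : Finset ℕ} {p : ℕ} (hp : p ∉ T) (c g : ℕ → ℝ) :
    pp (insert p T) c g = pp T c g + g p * pp T (fun i => c (i + 1)) g := by
  unfold pp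
  rw [Finset.sum_powerset_insert hp, Finset.mul_sum]
  congr 1
  apply Finset.sum_congr rfl
  intro D hD
  have hD' : p ∉ D := fun h => hp (Finset.mem_powerset.1 hD h)
  rw [Finset.card_insert_of_notMem hD', Finset.prod_insert hD']
  ring

lemma pp_neg (T : Finset ℕ) (c g : ℕ → ℝ) : pp T (fun i => - c i) g = - pp T c g := by
  simp [pp, Finset.sum_neg_distrib]

lemma pp_zero (T : Finset ℕ) (g : ℕ → ℝ) : pp T (fun _ => 0) g = 0 := by
  simp [pp]

lemma dl_succ (k : ℕ) : (fun i => dl (k+1) (i+1)) = dl k := by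
  funext i; simp [dl]
lemma dl_zero : (fun i => dl 0 (i+1)) = fun _ => 0 := by
  funext i; simp [dl]
lemma yc_succ (k : ℕ) : (fun i => yc (k+1) (i+1)) = fun i => - yc k i := by
  funext i
  by_cases h : i ≤ k <;> simp [yc, h, pow_succ]
lemma yc_zero : (fun i => yc 0 (i+1)) = fun _ => 0 := by
  funext i; simp [yc]

lemma es_insert {T : Finset ℕ} {p : ℕ} (hp : p ∉ T) (g : ℕ → ℝ) (k : ℕ) :
    pp (insert p T) (dl (k+1)) g = pp T (dl (k+1)) g + g p * pp T (dl k) g := by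
  rw [pp_insert hp, dl_succ]

lemma es_zero (T : Finset ℕ) (g : ℕ → ℝ) : pp T (dl 0) g = 1 := by
  induction T using Finset.induction_on with
  | empty => simp [pp_empty, dl]
  | insert p T hp ih => rw [pp_insert hp, dl_zero, pp_zero, ih]; ring

lemma ys_zero (T : Finset ℕ) (g : ℕ → ℝ) : pp T (yc 0) g = 1 := by
  induction T using Finset.induction_on with
  | empty => simp [pp_empty, yc]
  | insert p T hp ih => rw [pp_insert hp, yc_zero, pp_zero, ih]; ring

lemma ys_insert {T : Finset ℕ} {p : ℕ} (hp : p ∉ T) (g : ℕ → ℝ) (k : ℕ) :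
    pp (insert p T) (yc (k+1)) g = pp T (yc (k+1)) g - g p * pp T (yc k) g := by
  rw [pp_insert hp, yc_succ, pp_neg]; ring

lemma pp_nonneg (T : Finset ℕ) (c g : ℕ → ℝ) (hc : ∀ i, 0 ≤ c i) (hg : ∀ p ∈ T, 0 ≤ g p) :
    0 ≤ pp T c g := by
  unfold pp
  apply Finset.sum_nonneg
  intro D hD
  exact mul_nonneg (hc _) (Finset.prod_nonneg fun p hp => hg p (Finset.mem_powerset.1 hD hp))

lemma dl_nonneg (k i : ℕ) : 0 ≤ dl k i := by unfold dl; split_ifs <;> norm_num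

lemma es_eq_zero (T : Finset ℕ) (g : ℕ → ℝ) (k : ℕ) (h : T.card < k) : pp T (dl k) g = 0 := by
  unfold pp
  apply Finset.sum_eq_zero
  intro D hD
  have := Finset.card_le_card (Finset.mem_powerset.1 hD)
  have h2 : D.card ≠ k := by omega
  simp [dl, h2]

/-- Bonferroni inequalities. -/
lemma bonf (T : Finset ℕ) (g : ℕ → ℝ) (hg : ∀ p ∈ T, 0 ≤ g p ∧ g p ≤ 1) (k : ℕ) :
    0 ≤ (-1) ^ k * (pp T (yc k) g - ∏ p ∈ T, (1 - g p)) ∧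
    (-1) ^ k * (pp T (yc k) g - ∏ p ∈ T, (1 - g p)) ≤ pp T (dl (k+1)) g := by
  induction T using Finset.induction_on generalizing k with
  | empty => simp [pp_empty, yc, dl]
  | insert p T hp ih =>
    have hgp := hg p (Finset.mem_insert_self _ _)
    have hgT : ∀ q ∈ T, 0 ≤ g q ∧ g q ≤ 1 := fun q hq => hg q (Finset.mem_insert_of_mem hq)
    have ih' := ih hgT
    have hV0 : 0 ≤ ∏ q ∈ T, (1 - g q) :=
      Finset.prod_nonneg fun q hq => by linarith [(hgT q hq).2]
    have hV1 : ∏ q ∈ T, (1 - g q) ≤ 1 :=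
      Finset.prod_le_one (fun q hq => by linarith [(hgT q hq).2])
        (fun q hq => by linarith [(hgT q hq).1])
    rw [Finset.prod_insert hp]
    set V := ∏ q ∈ T, (1 - g q) with hV
    cases k with
    | zero =>
      have h0 := ih' 0
      rw [es_insert hp, ys_zero, es_zero]
      rw [ys_zero] at h0
      simp only [pow_zero, one_mul] at h0 ⊢
      constructor
      · nlinarith [h0.1]
      · nlinarith [h0.2]
    | succ k =>
      have h0 := ih' k
      have h1 := ih' (k+1)
      rw [es_insert hp, ys_insert hp]
      have e : (-1:ℝ) ^ (k+1) * (pp T (yc (k+1)) g - g p * pp T (yc k) g - (1 - g p) * V)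
        = (-1) ^ (k+1) * (pp T (yc (k+1)) g - V) + g p * ((-1)^k * (pp T (yc k) g - V)) := by ring
      rw [e]
      constructor
      · exact add_nonneg h1.1 (mul_nonneg hgp.1 h0.1)
      · exact add_le_add h1.2 (mul_le_mul_of_nonneg_left h0.2 hgp.1)

lemma bonf_even (T : Finset ℕ) (g : ℕ → ℝ) (hg : ∀ p ∈ T, 0 ≤ g p ∧ g p ≤ 1) (k : ℕ)
    (hk : Even k) :
    ∏ p ∈ T, (1 - g p) ≤ pp T (yc k) g ∧
    pp T (yc k) g ≤ ∏ p ∈ T, (1 - g p) + pp T (dl (k+1)) g := by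
  have h := bonf T g hg k
  rw [hk.neg_one_pow] at h
  constructor <;> linarith [h.1, h.2]

lemma pow_succ_lb (s t : ℝ) (hs : 0 ≤ s) (ht : 0 ≤ t) (k : ℕ) :
    s ^ (k+1) + (k+1) * t * s ^ k ≤ (s + t) ^ (k+1) := by
  induction k with
  | zero => simp
  | succ k ih =>
    have h1 : (s+t)^(k+1+1) = (s+t) * (s+t)^(k+1) := by ring
    have h2 : (s + t) * (s ^ (k+1) + (k+1) * t * s ^ k) ≤ (s+t) * (s+t)^(k+1) :=
      mul_le_mul_of_nonneg_left ih (by linarith)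
    have h3 : 0 ≤ t * ((k+1) * t * s ^ k) := by positivity
    rw [h1]
    refine le_trans ?_ h2
    push_cast
    have e : (s + t) * (s ^ (k+1) + (k+1) * t * s ^ k) =
      s ^ (k + 1 + 1) + (k + 1 + 1) * t * s ^ (k + 1) + t * ((k+1) * t * s ^ k) := by ring
    rw [e]; linarith

lemma es_le (T : Finset ℕ) (g : ℕ → ℝ) (hg : ∀ p ∈ T, 0 ≤ g p) (k : ℕ) :
    pp T (dl k) g ≤ (∑ p ∈ T, g p) ^ k / (k.factorial : ℝ) := by
  induction T using Finset.induction_on generalizing k with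
  | empty => 
    cases k <;> simp [pp_empty, dl]
  | insert p T hp ih =>
    have hgp := hg p (Finset.mem_insert_self _ _)
    have hgT : ∀ q ∈ T, 0 ≤ g q := fun q hq => hg q (Finset.mem_insert_of_mem hq)
    have ih' := ih hgT
    cases k with
    | zero => simp [es_zero]
    | succ k =>
      rw [es_insert hp, Finset.sum_insert hp]
      have hs : 0 ≤ ∑ q ∈ T, g q := Finset.sum_nonneg hgT
      set s := ∑ q ∈ T, g q
      have h1 := ih' (k+1)
      have h2 := mul_le_mul_of_nonneg_left (ih' k) hgp
      have h3 := pow_succ_lb s (g p) hs hgp k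
      have hf : (0:ℝ) < (k.factorial : ℝ) := by exact_mod_cast Nat.factorial_pos k
      have : s ^ (k+1) / ((k+1).factorial : ℝ) + g p * (s ^ k / (k.factorial : ℝ))
          = (s ^ (k+1) + (k+1) * g p * s ^ k) / ((k+1).factorial : ℝ) := by
        rw [Nat.factorial_succ]; push_cast; field_simp
      calc _ ≤ s ^ (k+1) / ((k+1).factorial : ℝ) + g p * (s ^ k / (k.factorial : ℝ)) := 
            add_le_add h1 h2
        _ ≤ _ := by
            rw [this, add_comm (g p) s]
            gcongr

/-- size of the total remainder weights: truncated -/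
lemma pp_abs_le (T : Finset ℕ) (c : ℕ → ℝ) (k : ℕ) (hc : ∀ i, |c i| ≤ if i ≤ k then 1 else 0) :
    pp T (fun i => |c i|) (fun _ => 2) ≤ (1 + 2 * (T.card : ℝ)) ^ k := by
  have h1 : pp T (fun i => |c i|) (fun _ => 2)
      ≤ pp T (fun i => ∑ j ∈ Finset.range (k+1), dl j i) (fun _ => 2) := by
    unfold pp
    apply Finset.sum_le_sum
    intro D _
    apply mul_le_mul_of_nonneg_right _ (by positivity)
    refine (hc _).trans ?_
    simp only [dl]
    rw [Finset.sum_ite_eq]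
    simp [Nat.lt_succ_iff]
  have h2 : pp T (fun i => ∑ j ∈ Finset.range (k+1), dl j i) (fun _ => 2)
      = ∑ j ∈ Finset.range (k+1), pp T (dl j) (fun _ => 2) := by
    unfold pp
    rw [Finset.sum_comm]
    apply Finset.sum_congr rfl
    intro D _
    rw [Finset.sum_mul]
  rw [h2] at h1
  refine h1.trans ?_
  rw [add_comm (1:ℝ), add_pow]
  apply Finset.sum_le_sum
  intro j hj
  refine (es_le T _ (by intros; norm_num) j).trans ?_
  rw [Finset.sum_const, nsmul_eq_mul, one_pow, mul_one, mul_comm (T.card : ℝ)]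
  have hch : (1:ℝ) ≤ (k.choose j : ℝ) := by
    exact_mod_cast Nat.choose_pos (by simpa [Nat.lt_succ_iff] using hj)
  have hf : (1:ℝ) ≤ (j.factorial : ℝ) := by exact_mod_cast Nat.factorial_pos j
  have h0 : (0:ℝ) ≤ (2 * (T.card:ℝ)) ^ j := by positivity
  calc _ ≤ (2 * (T.card:ℝ)) ^ j := div_le_self h0 hf
    _ ≤ _ := le_mul_of_one_le_right h0 hch

lemma yc_abs (k i : ℕ) : |yc k i| ≤ if i ≤ k then 1 else 0 := by
  unfold yc; split_ifs <;> simp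
lemma dl_abs (k i : ℕ) : |dl k i| ≤ if i ≤ k then 1 else 0 := by
  unfold dl; split_ifs with h1 h2 h2 <;> simp; omega

end PA

section PB

/-- Evaluation of products of blocks. -/
lemma block_eval (N : Finset ℕ) (b : ℕ → ℕ → ℝ) (g : ℕ → ℝ) (X R : ℝ) (U : Finset ℕ)
    (hR : ∀ D ⊆ U, |∑ n ∈ N, ∏ p ∈ D, b n p - X * ∏ p ∈ D, g p| ≤ R * ∏ _p ∈ D, (2:ℝ))
    (T : ℕ → Finset ℕ) (c : ℕ → ℕ → ℝ) (J : Finset ℕ) :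
    (∀ j ∈ J, T j ⊆ U) → (∀ i ∈ J, ∀ j ∈ J, i ≠ j → Disjoint (T i) (T j)) →
    ∀ D0 ⊆ U, (∀ j ∈ J, Disjoint D0 (T j)) →
    |∑ n ∈ N, (∏ p ∈ D0, b n p) * ∏ j ∈ J, pp (T j) (c j) (b n)
      - X * (∏ p ∈ D0, g p) * ∏ j ∈ J, pp (T j) (c j) g| ≤
      R * (∏ _p ∈ D0, (2:ℝ)) * ∏ j ∈ J, pp (T j) (fun i => |c j i|) (fun _ => 2) := by
  induction J using Finset.induction_on with
  | empty => 
    intro _ _ D0 hD0 _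
    simpa using hR D0 hD0
  | insert i J hi ih =>
    intro hU hdisj D0 hD0 hD0d
    have ih' := ih (fun j hj => hU j (Finset.mem_insert_of_mem hj))
      (fun a ha b hb => hdisj a (Finset.mem_insert_of_mem ha) b (Finset.mem_insert_of_mem hb))
    have hdi : ∀ D ∈ (T i).powerset, Disjoint D0 D := fun D hD =>
      Disjoint.mono_right (Finset.mem_powerset.1 hD) (hD0d i (Finset.mem_insert_self _ _))
    have key : ∀ D ∈ (T i).powerset,
      |∑ n ∈ N, (∏ p ∈ D0 ∪ D, b n p) * ∏ j ∈ J, pp (T j) (c j) (b n)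
      - X * (∏ p ∈ D0 ∪ D, g p) * ∏ j ∈ J, pp (T j) (c j) g| ≤
      R * (∏ _p ∈ D0 ∪ D, (2:ℝ)) * ∏ j ∈ J, pp (T j) (fun i => |c j i|) (fun _ => 2) := by
      intro D hD
      have hDT := Finset.mem_powerset.1 hD
      apply ih'
      · exact Finset.union_subset hD0 (hDT.trans (hU i (Finset.mem_insert_self _ _)))
      · intro j hj
        rw [Finset.disjoint_union_left]
        refine ⟨hD0d j (Finset.mem_insert_of_mem hj), Disjoint.mono_left hDT ?_⟩
        apply hdisj i (Finset.mem_insert_self _ _) j (Finset.mem_insert_of_mem hj)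
        rintro rfl; exact hi hj
    have e1 : ∑ n ∈ N, (∏ p ∈ D0, b n p) * ∏ j ∈ insert i J, pp (T j) (c j) (b n)
        = ∑ D ∈ (T i).powerset, c i D.card *
          ∑ n ∈ N, (∏ p ∈ D0 ∪ D, b n p) * ∏ j ∈ J, pp (T j) (c j) (b n) := by
      simp_rw [Finset.mul_sum]
      rw [Finset.sum_comm]
      apply Finset.sum_congr rfl
      intro n _
      rw [Finset.prod_insert hi]
      conv_lhs => rw [pp]
      rw [Finset.sum_mul, Finset.mul_sum]
      apply Finset.sum_congr rfl
      intro D hD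
      rw [Finset.prod_union (hdi D hD)]; ring
    have e2 : X * (∏ p ∈ D0, g p) * ∏ j ∈ insert i J, pp (T j) (c j) g
        = ∑ D ∈ (T i).powerset, c i D.card *
          (X * (∏ p ∈ D0 ∪ D, g p) * ∏ j ∈ J, pp (T j) (c j) g) := by
      rw [Finset.prod_insert hi]
      conv_lhs => rw [pp]
      rw [Finset.sum_mul, Finset.mul_sum]
      apply Finset.sum_congr rfl
      intro D hD
      rw [Finset.prod_union (hdi D hD)]; ring
    have e3 : R * (∏ _p ∈ D0, (2:ℝ)) * ∏ j ∈ insert i J, pp (T j) (fun i => |c j i|) (fun _ => 2)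
        = ∑ D ∈ (T i).powerset, |c i D.card| *
          (R * (∏ _p ∈ D0 ∪ D, (2:ℝ)) * ∏ j ∈ J, pp (T j) (fun i => |c j i|) (fun _ => 2)) := by
      rw [Finset.prod_insert hi]
      conv_lhs => rw [pp]
      rw [Finset.sum_mul, Finset.mul_sum]
      apply Finset.sum_congr rfl
      intro D hD
      rw [Finset.prod_union (hdi D hD)]; ring
    rw [e1, e2, e3, ← Finset.sum_sub_distrib]
    refine (Finset.abs_sum_le_sum_abs _ _).trans ?_
    apply Finset.sum_le_sum
    intro D hD
    rw [← mul_sub, abs_mul]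
    exact mul_le_mul_of_nonneg_left (key D hD) (abs_nonneg _)

lemma hooley_lower (x y e : ℕ → ℝ) (J : Finset ℕ)
    (h : ∀ j ∈ J, 0 ≤ x j ∧ x j ≤ y j ∧ y j ≤ x j + e j) :
    ∏ j ∈ J, y j - ∑ l ∈ J, ∏ j ∈ J, (if j = l then e j else y j) ≤ ∏ j ∈ J, x j := by
  induction J using Finset.induction_on with
  | empty => simp
  | insert i J hi ih =>
    have ih' := ih (fun j hj => h j (Finset.mem_insert_of_mem hj))
    have hI := h i (Finset.mem_insert_self _ _)
    rw [Finset.prod_insert hi, Finset.prod_insert hi, Finset.sum_insert hi, Finset.prod_insert hi]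
    have e1 : ∏ j ∈ J, (if j = i then e j else y j) = ∏ j ∈ J, y j := by
      apply Finset.prod_congr rfl
      intro j hj
      rw [if_neg]; rintro rfl; exact hi hj
    have e2 : ∑ l ∈ J, ∏ j ∈ insert i J, (if j = l then e j else y j)
        = y i * ∑ l ∈ J, ∏ j ∈ J, (if j = l then e j else y j) := by
      rw [Finset.mul_sum]
      apply Finset.sum_congr rfl
      intro l hl
      rw [Finset.prod_insert hi, if_neg]
      rintro rfl; exact hi hl
    rw [e1, e2, if_pos rfl]
    have hx : 0 ≤ ∏ j ∈ J, x j :=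
      Finset.prod_nonneg fun j hj => (h j (Finset.mem_insert_of_mem hj)).1
    have hxy : ∏ j ∈ J, x j ≤ ∏ j ∈ J, y j :=
      Finset.prod_le_prod (fun j hj => (h j (Finset.mem_insert_of_mem hj)).1)
        (fun j hj => (h j (Finset.mem_insert_of_mem hj)).2.1)
    have hyi : 0 ≤ y i := hI.1.trans hI.2.1
    have hei : 0 ≤ e i := by linarith [hI.2.1, hI.2.2]
    have a1 := mul_le_mul_of_nonneg_left ih' hyi
    have a2 := mul_le_mul_of_nonneg_right hI.2.2 hx
    have a3 := mul_le_mul_of_nonneg_left hxy hei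
    nlinarith

/-- Abstract Brun-Hooley sieve. -/
theorem brun_hooley (N : Finset ℕ) (b : ℕ → ℕ → ℝ) (g : ℕ → ℝ) (X R : ℝ) (U : Finset ℕ)
    (hX : 0 ≤ X) 
    (hb : ∀ n ∈ N, ∀ p ∈ U, 0 ≤ b n p ∧ b n p ≤ 1)
    (hg : ∀ p ∈ U, 0 ≤ g p ∧ g p < 1)
    (hR : ∀ D ⊆ U, |∑ n ∈ N, ∏ p ∈ D, b n p - X * ∏ p ∈ D, g p| ≤ R * ∏ _p ∈ D, (2:ℝ))
    (T : ℕ → Finset ℕ) (k : ℕ → ℕ) (J : Finset ℕ)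
    (hk : ∀ j ∈ J, Even (k j))
    (hU : U = J.biUnion T) (hd : ∀ i ∈ J, ∀ j ∈ J, i ≠ j → Disjoint (T i) (T j))
    (hE : ∑ j ∈ J, pp (T j) (dl (k j + 1)) g / ∏ p ∈ T j, (1 - g p) ≤ 1 / 2) :
    X * (∏ p ∈ U, (1 - g p)) / 2
      - R * (∏ j ∈ J, pp (T j) (fun i => |yc (k j) i|) (fun _ => 2)
        + ∑ l ∈ J, ∏ j ∈ J, pp (T j) (fun i => |(if j = l then dl (k j + 1) else yc (k j)) i|)
            (fun _ => 2)) ≤ ∑ n ∈ N, ∏ p ∈ U, (1 - b n p) ∧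
    ∑ n ∈ N, ∏ p ∈ U, (1 - b n p) ≤ 2 * X * (∏ p ∈ U, (1 - g p)) + 
      R * (∏ j ∈ J, pp (T j) (fun i => |yc (k j) i|) (fun _ => 2)) := by
  have hTU : ∀ j ∈ J, T j ⊆ U := fun j hj => by
    rw [hU]; exact Finset.subset_biUnion_of_mem T hj
  have hpd : (J : Set ℕ).PairwiseDisjoint T := fun i hi j hj hij => hd i hi j hj hij
  have hsplit : ∀ f : ℕ → ℝ, ∏ p ∈ U, f p = ∏ j ∈ J, ∏ p ∈ T j, f p := fun f => by
    rw [hU, Finset.prod_biUnion hpd]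
  have ev := fun c => block_eval N b g X R U hR T c J hTU hd ∅ (by simp) (by simp)
  simp only [Finset.prod_empty, one_mul, mul_one] at ev
  have hpt : ∀ n ∈ N, ∀ j ∈ J, 0 ≤ ∏ p ∈ T j, (1 - b n p) ∧
      ∏ p ∈ T j, (1 - b n p) ≤ pp (T j) (yc (k j)) (b n) ∧
      pp (T j) (yc (k j)) (b n) ≤ ∏ p ∈ T j, (1 - b n p) + pp (T j) (dl (k j + 1)) (b n) := by
    intro n hn j hj
    have hb' : ∀ p ∈ T j, 0 ≤ b n p ∧ b n p ≤ 1 := fun p hp => hb n hn p (hTU j hj hp)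
    exact ⟨Finset.prod_nonneg fun p hp => by linarith [(hb' p hp).2],
      bonf_even _ _ hb' _ (hk j hj)⟩
  have hmain : ∀ j ∈ J, 0 < ∏ p ∈ T j, (1 - g p) ∧
      ∏ p ∈ T j, (1 - g p) ≤ pp (T j) (yc (k j)) g ∧
      pp (T j) (yc (k j)) g ≤ ∏ p ∈ T j, (1 - g p) + pp (T j) (dl (k j + 1)) g := by
    intro j hj
    have hg' : ∀ p ∈ T j, 0 ≤ g p ∧ g p < 1 := fun p hp => hg p (hTU j hj hp)
    exact ⟨Finset.prod_pos fun p hp => by linarith [(hg' p hp).2],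
      bonf_even _ _ (fun p hp => ⟨(hg' p hp).1, (hg' p hp).2.le⟩) _ (hk j hj)⟩
  have hE0 : ∀ j ∈ J, 0 ≤ pp (T j) (dl (k j + 1)) g := fun j hj =>
    pp_nonneg _ _ _ (dl_nonneg _) (fun p hp => (hg p (hTU j hj hp)).1)
  have evY := ev (fun j => yc (k j))
  set Z := ∏ j ∈ J, pp (T j) (fun i => |yc (k j) i|) (fun _ => 2) with hZ
  have hVpos : 0 < ∏ j ∈ J, ∏ p ∈ T j, (1 - g p) := Finset.prod_pos fun j hj => (hmain j hj).1
  have hVY : ∏ j ∈ J, ∏ p ∈ T j, (1 - g p) ≤ ∏ j ∈ J, pp (T j) (yc (k j)) g :=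
    Finset.prod_le_prod (fun j hj => (hmain j hj).1.le) (fun j hj => (hmain j hj).2.1)
  simp only [hsplit]
  constructor
  · have h1 : ∑ n ∈ N, (∏ j ∈ J, pp (T j) (yc (k j)) (b n) - 
        ∑ l ∈ J, ∏ j ∈ J, pp (T j) (if j = l then dl (k j + 1) else yc (k j)) (b n))
        ≤ ∑ n ∈ N, ∏ j ∈ J, ∏ p ∈ T j, (1 - b n p) := by
      apply Finset.sum_le_sum
      intro n hn
      have := hooley_lower _ _ _ J (hpt n hn)
      refine le_trans (le_of_eq ?_) this
      congr 1
      refine Finset.sum_congr rfl fun l _ => Finset.prod_congr rfl fun j _ => ?_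
      split_ifs <;> rfl
    refine le_trans ?_ h1
    rw [Finset.sum_sub_distrib, Finset.sum_comm]
    have h2 : ∑ l ∈ J, ∑ n ∈ N, ∏ j ∈ J, pp (T j) (if j = l then dl (k j + 1) else yc (k j)) (b n)
      ≤ ∑ l ∈ J, (X * ∏ j ∈ J, pp (T j) (if j = l then dl (k j + 1) else yc (k j)) g
        + R * ∏ j ∈ J, pp (T j) (fun i => |(if j = l then dl (k j + 1) else yc (k j)) i|)
            (fun _ => 2)) := by
      apply Finset.sum_le_sum
      intro l _
      have := (abs_le.1 (ev (fun j => if j = l then dl (k j + 1) else yc (k j)))).2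
      linarith
    rw [Finset.sum_add_distrib, ← Finset.mul_sum, ← Finset.mul_sum] at h2
    have h3 : ∑ l ∈ J, ∏ j ∈ J, pp (T j) (if j = l then dl (k j + 1) else yc (k j)) g
        ≤ (1/2) * ∏ j ∈ J, pp (T j) (yc (k j)) g := by
      refine le_trans ?_ (mul_le_mul_of_nonneg_right hE (hVpos.le.trans hVY))
      rw [Finset.sum_mul]
      apply Finset.sum_le_sum
      intro l hl
      rw [← Finset.mul_prod_erase J _ hl, ← Finset.mul_prod_erase J _ hl, if_pos rfl, ← mul_assoc]
      have e : ∏ x ∈ J.erase l, pp (T x) (if x = l then dl (k x + 1) else yc (k x)) g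
        = ∏ x ∈ J.erase l, pp (T x) (yc (k x)) g := by
        refine Finset.prod_congr rfl fun j hj => ?_
        rw [if_neg (Finset.ne_of_mem_erase hj)]
      rw [e]
      apply mul_le_mul_of_nonneg_right
      · rw [div_mul_eq_mul_div, le_div_iff₀ (hmain l hl).1]
        exact mul_le_mul_of_nonneg_left (hmain l hl).2.1 (hE0 l hl)
      · refine Finset.prod_nonneg fun j hj => ?_
        have := hmain j (Finset.mem_of_mem_erase hj)
        linarith [this.1, this.2.1]
    have h4 := (abs_le.1 evY).1
    have h5 := mul_le_mul_of_nonneg_left h3 hX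
    have h6 := mul_le_mul_of_nonneg_left hVY hX
    linarith
  · have h1 : ∑ n ∈ N, ∏ j ∈ J, ∏ p ∈ T j, (1 - b n p) ≤ 
        ∑ n ∈ N, ∏ j ∈ J, pp (T j) (yc (k j)) (b n) := by
      apply Finset.sum_le_sum
      intro n hn
      exact Finset.prod_le_prod (fun j hj => (hpt n hn j hj).1) (fun j hj => (hpt n hn j hj).2.1)
    have h2 : ∏ j ∈ J, pp (T j) (yc (k j)) g ≤ 2 * ∏ j ∈ J, ∏ p ∈ T j, (1 - g p) := by
      have h3 : ∏ j ∈ J, pp (T j) (yc (k j)) g ≤ ∏ j ∈ J, ((∏ p ∈ T j, (1 - g p)) *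
          Real.exp (pp (T j) (dl (k j + 1)) g / ∏ p ∈ T j, (1 - g p))) := by
        apply Finset.prod_le_prod
        · intro j hj
          have := hmain j hj
          linarith [this.1, this.2.1]
        · intro j hj
          have := hmain j hj
          refine this.2.2.trans ?_
          have h4 := Real.add_one_le_exp (pp (T j) (dl (k j + 1)) g / ∏ p ∈ T j, (1 - g p))
          refine le_trans (le_of_eq ?_) (mul_le_mul_of_nonneg_left h4 this.1.le)
          have := this.1.ne'
          field_simp
          ring
      rw [Finset.prod_mul_distrib, ← Real.exp_sum] at h3
      have h5 : Real.exp (∑ j ∈ J, pp (T j) (dl (k j + 1)) g / ∏ p ∈ T j, (1 - g p)) ≤ 2 := by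
        refine (Real.exp_le_exp.2 hE).trans ?_
        have h7 : Real.exp (1/2) * Real.exp (1/2) = Real.exp 1 := by
          rw [← Real.exp_add]; norm_num
        nlinarith [Real.exp_one_lt_d9, Real.exp_pos (1/2)]
      have := mul_le_mul_of_nonneg_left h5 hVpos.le
      linarith
    have h4 := (abs_le.1 evY).2
    have h5 := mul_le_mul_of_nonneg_left h2 hX
    linarith

end PB

section PC
open Finset
open scoped ArithmeticFunction.vonMangoldt

lemma abel_bound (f c : ℕ → ℝ) (m : ℕ) (B : ℝ) (hf : ∀ n ≥ m, 0 ≤ f n)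
    (hmono : ∀ n ≥ m, f (n+1) ≤ f n) (hc : ∀ k ≥ m, |∑ i ∈ Ico m k, c i| ≤ B) (k : ℕ) (hk : m ≤ k) :
    |∑ i ∈ Ico m k, c i * f i| ≤ B * f m := by
  have key : |∑ i ∈ Ico m k, c i * f i - (∑ i ∈ Ico m k, c i) * f k| ≤ B * (f m - f k) := by
    induction k, hk using Nat.le_induction with
    | base => simp
    | succ k hk ih =>
      rw [Finset.sum_Ico_succ_top hk]
      have e : ∑ i ∈ Ico m k, c i * f i + c k * f k - (∑ i ∈ Ico m (k+1), c i) * f (k+1)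
        = (∑ i ∈ Ico m k, c i * f i - (∑ i ∈ Ico m k, c i) * f k)
          + (∑ i ∈ Ico m (k+1), c i) * (f k - f (k+1)) := by
        rw [Finset.sum_Ico_succ_top hk]; ring
      rw [e]
      refine (abs_add_le _ _).trans ?_
      rw [abs_mul, abs_of_nonneg (sub_nonneg.2 (hmono k hk))]
      have h2 := mul_le_mul_of_nonneg_right (hc (k+1) (by omega)) (sub_nonneg.2 (hmono k hk))
      linarith
  have h1 : |(∑ i ∈ Ico m k, c i) * f k| ≤ B * f k := by
    rw [abs_mul, abs_of_nonneg (hf k hk)]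
    exact mul_le_mul_of_nonneg_right (hc k hk) (hf k hk)
  have h2 := abs_add_le (∑ i ∈ Ico m k, c i * f i - (∑ i ∈ Ico m k, c i) * f k)
    ((∑ i ∈ Ico m k, c i) * f k)
  rw [sub_add_cancel] at h2
  linarith

/-- hyperbola-type identity for completely multiplicative weights -/
lemma lambda_conv (w : ℕ → ℝ) (hw : ∀ m n, w (m * n) = w m * w n) (N : ℕ) :
    ∑ n ∈ Ioc 0 N, w n * Real.log n = ∑ m ∈ Ioc 0 N, w m * Λ m * ∑ k ∈ Ioc 0 (N / m), w k := by
  let f : ArithmeticFunction ℝ := ⟨fun n => w n * Λ n, by simp⟩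
  let g : ArithmeticFunction ℝ := ⟨fun n => if n = 0 then 0 else w n, by simp⟩
  have h := ArithmeticFunction.sum_Ioc_mul_eq_sum_sum f g N
  have e1 : ∑ n ∈ Ioc 0 N, w n * Real.log n = ∑ n ∈ Ioc 0 N, (f * g) n := by
    apply Finset.sum_congr rfl
    intro n hn
    have hn0 : n ≠ 0 := by have := (Finset.mem_Ioc.1 hn).1; omega
    rw [ArithmeticFunction.mul_apply, ← ArithmeticFunction.vonMangoldt_sum, Finset.mul_sum,
      ← Nat.map_div_right_divisors, Finset.sum_map]
    · apply Finset.sum_congr rfl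
      intro d hd
      have hd' := Nat.dvd_of_mem_divisors hd
      have hdn : n / d ≠ 0 := by
        have := Nat.div_pos (Nat.le_of_dvd (Nat.pos_of_ne_zero hn0) hd') (Nat.pos_of_mem_divisors hd)
        omega
      have e0 : w n = w d * w (n / d) := by
        conv_lhs => rw [← Nat.mul_div_cancel' hd', hw]
      change w n * Λ d = (w d * Λ d) * (if n / d = 0 then 0 else w (n / d))
      rw [if_neg hdn, e0]
      ring
  rw [e1, h]
  apply Finset.sum_congr rfl
  intro m hm
  simp only [f, g, ArithmeticFunction.coe_mk]
  congr 1
  apply Finset.sum_congr rfl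
  intro k hk
  rw [if_neg]
  have := (Finset.mem_Ioc.1 hk).1; omega

lemma psi_bd (N : ℕ) : ∑ m ∈ Ioc 0 N, Λ m ≤ 6 * N := by
  have h := Chebyshev.psi_le_const_mul_self (x := (N:ℝ)) (by positivity)
  unfold Chebyshev.psi at h
  rw [Nat.floor_natCast] at h
  refine h.trans ?_
  have : Real.log 4 ≤ 2 := by
    have : (4:ℝ) = 2 ^ 2 := by norm_num
    rw [this, Real.log_pow]
    have := Real.log_two_lt_d9
    push_cast; linarith
  have h0 : (0:ℝ) ≤ N := by positivity
  nlinarith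

lemma log_fact_lb (N : ℕ) : N * Real.log N - N ≤ ∑ n ∈ Ioc 0 N, Real.log n := by
  induction N with
  | zero => simp
  | succ N ih =>
    rw [← Finset.insert_Ioc_right_eq_Ioc_add_one (by omega), Finset.sum_insert (by simp)]
    rcases Nat.eq_zero_or_pos N with rfl | hN
    · simp
    have hN' : (0:ℝ) < N := by exact_mod_cast hN
    have h1 : Real.log ((N+1 : ℕ):ℝ) - Real.log N ≤ 1 / N := by
      rw [← Real.log_div (by positivity) hN'.ne']
      have := Real.log_le_sub_one_of_pos (x := ((N+1:ℕ):ℝ) / N) (by positivity)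
      refine this.trans (le_of_eq ?_)
      push_cast; field_simp; ring
    have h2 : N * (Real.log ((N+1 : ℕ):ℝ) - Real.log N) ≤ 1 := by
      calc _ ≤ N * (1 / (N:ℝ)) := by gcongr
        _ = 1 := by field_simp
    push_cast at *
    nlinarith

lemma mertens_lambda (N : ℕ) (hN : 1 ≤ N) : |∑ m ∈ Ioc 0 N, Λ m / m - Real.log N| ≤ 6 := by
  have h := lambda_conv (fun _ => 1) (by simp) N
  simp only [one_mul, Finset.sum_const, Nat.card_Ioc, nsmul_eq_mul, mul_one, Nat.sub_zero] at h
  have hN' : (0:ℝ) < N := by exact_mod_cast hN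
  have hub : ∑ m ∈ Ioc 0 N, Λ m * ((N / m : ℕ) : ℝ) ≤ N * ∑ m ∈ Ioc 0 N, Λ m / m := by
    rw [Finset.mul_sum]
    apply Finset.sum_le_sum
    intro m _
    have h1 : ((N / m : ℕ) : ℝ) ≤ N / m := Nat.cast_div_le
    calc _ ≤ Λ m * (N / m) := mul_le_mul_of_nonneg_left h1 ArithmeticFunction.vonMangoldt_nonneg
      _ = _ := by ring
  have hlb : N * ∑ m ∈ Ioc 0 N, Λ m / m ≤ 
      ∑ m ∈ Ioc 0 N, Λ m * ((N / m : ℕ) : ℝ) + ∑ m ∈ Ioc 0 N, Λ m := by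
    rw [Finset.mul_sum, ← Finset.sum_add_distrib]
    apply Finset.sum_le_sum
    intro m hm
    have h1 : (N:ℝ) / m ≤ ((N / m : ℕ) : ℝ) + 1 := by
      have := Nat.lt_floor_add_one ((N:ℝ)/m)
      rw [Nat.floor_div_natCast, Nat.floor_natCast] at this
      exact this.le
    have := mul_le_mul_of_nonneg_left h1 (ArithmeticFunction.vonMangoldt_nonneg (n := m))
    calc _ = Λ m * (N / m) := by ring
      _ ≤ _ := by linarith
  have hup : ∑ n ∈ Ioc 0 N, Real.log n ≤ N * Real.log N := by
    calc _ ≤ ∑ n ∈ Ioc 0 N, Real.log N := by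
          apply Finset.sum_le_sum
          intro n hn
          have := Finset.mem_Ioc.1 hn
          exact Real.log_le_log (by exact_mod_cast this.1) (by exact_mod_cast this.2)
      _ = _ := by simp
  have hl := log_fact_lb N
  have hp := psi_bd N
  rw [abs_le]
  constructor
  · have : N * (-6) ≤ N * (∑ m ∈ Ioc 0 N, Λ m / m - Real.log N) := by nlinarith
    exact le_of_mul_le_mul_left this hN'
  · have : N * (∑ m ∈ Ioc 0 N, Λ m / m - Real.log N) ≤ N * 6 := by nlinarith
    exact le_of_mul_le_mul_left this hN'

/-- the nonprincipal character mod 4, real valued -/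
noncomputable def ch (n : ℕ) : ℝ := ((ZMod.χ₄ (n : ZMod 4) : ℤ) : ℝ)

lemma ch_mul (m n : ℕ) : ch (m * n) = ch m * ch n := by
  unfold ch; push_cast; rw [map_mul]; push_cast; rfl

lemma ch_eq (n : ℕ) : ch n = if n % 2 = 0 then 0 else if n % 4 = 1 then 1 else -1 := by
  unfold ch; rw [ZMod.χ₄_nat_eq_if_mod_four]; split_ifs <;> simp

lemma ch_abs (n : ℕ) : |ch n| ≤ 1 := by
  rw [ch_eq]; split_ifs <;> simp

lemma ch_sum_range (k : ℕ) : ∑ i ∈ range k, ch i = if k % 4 = 2 ∨ k % 4 = 3 then 1 else 0 := by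
  induction k with
  | zero => simp
  | succ k ih =>
    rw [Finset.sum_range_succ, ih, ch_eq]
    have : k % 4 = 0 ∨ k % 4 = 1 ∨ k % 4 = 2 ∨ k % 4 = 3 := by omega
    rcases this with h | h | h | h
    · have h1 : (k+1) % 4 = 1 := by omega
      have h2 : k % 2 = 0 := by omega
      simp [h, h1, h2]
    · have h1 : (k+1) % 4 = 2 := by omega
      have h2 : k % 2 = 1 := by omega
      simp [h, h1, h2]
    · have h1 : (k+1) % 4 = 3 := by omega
      have h2 : k % 2 = 0 := by omega
      simp [h, h1, h2]
    · have h1 : (k+1) % 4 = 0 := by omega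
      have h2 : k % 2 = 1 := by omega
      simp [h, h1, h2]

lemma ch_sum_Ico (m k : ℕ) (h : m ≤ k) : |∑ i ∈ Ico m k, ch i| ≤ 1 := by
  rw [Finset.sum_Ico_eq_sub _ h, ch_sum_range, ch_sum_range]
  split_ifs <;> simp

lemma ch_tail (m k : ℕ) (hm : 1 ≤ m) (h : m ≤ k) : |∑ i ∈ Ico m k, ch i * (1 / (i:ℝ))| ≤ 1 / m := by
  have := abel_bound (fun n => 1 / (n:ℝ)) ch m 1 (fun n _ => by positivity) (fun n hn => by
    have : (0:ℝ) < n := by exact_mod_cast (by omega : 0 < n)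
    push_cast
    gcongr; linarith) (fun k hk => ch_sum_Ico m k hk) k h
  simpa using this

lemma Ioc_eq_Ico (N : ℕ) : Ioc 0 N = Ico 1 (N+1) := by ext; simp; omega

lemma ch_log (N : ℕ) : |∑ n ∈ Ioc 0 N, ch n * (1/(n:ℝ)) * Real.log n| ≤ 1 := by
  rw [Ioc_eq_Ico]
  rcases lt_or_ge N 2 with h | h
  · interval_cases N <;> simp
  rw [← Finset.sum_Ico_consecutive _ (show 1 ≤ 3 by norm_num) (by omega : 3 ≤ N + 1)]
  have e : ∑ n ∈ Ico 1 3, ch n * (1/(n:ℝ)) * Real.log n = 0 := by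
    rw [show Ico 1 3 = {1, 2} from rfl]
    simp [ch_eq]
  rw [e, zero_add]
  have := abel_bound (fun n => Real.log n / n) ch 3 1 (fun n _ => by positivity) (fun n hn => by
    have h3 : (3:ℝ) ≤ n := by exact_mod_cast hn
    have := Real.exp_one_lt_d9
    apply Real.log_div_self_antitoneOn
    · simp; linarith
    · simp; linarith
    · push_cast; linarith) (fun k hk => ch_sum_Ico 3 k hk) (N+1) (by omega)
  have e2 : ∑ i ∈ Ico 3 (N+1), ch i * (1/(i:ℝ)) * Real.log i
     = ∑ i ∈ Ico 3 (N+1), ch i * (Real.log i / i) := by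
    apply Finset.sum_congr rfl; intros; ring
  rw [e2]
  refine this.trans ?_
  have := Real.log_le_sub_one_of_pos (x := 3) (by norm_num)
  push_cast; linarith

lemma mertens_chi_lambda (N : ℕ) : |∑ m ∈ Ioc 0 N, ch m * (1 / (m:ℝ)) * Λ m| ≤ 12 := by
  rcases Nat.eq_zero_or_pos N with rfl | hN
  · simp
  have hN' : (0:ℝ) < N := by exact_mod_cast hN
  have h := lambda_conv (fun n => ch n * (1/(n:ℝ))) (by
    intro m n; simp only [ch_mul]; push_cast; ring) N
  set H := ∑ k ∈ Ioc 0 N, ch k * (1/(k:ℝ)) with hH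
  have hHlb : 2/3 ≤ H := by
    rw [hH, Ioc_eq_Ico]
    rcases lt_or_ge N 2 with h | h
    · have : N = 1 := by omega
      subst this
      rw [show Ico 1 2 = {1} from rfl]; simp [ch_eq]; norm_num
    rw [← Finset.sum_Ico_consecutive _ (show 1 ≤ 3 by norm_num) (by omega : 3 ≤ N + 1)]
    have e : ∑ n ∈ Ico 1 3, ch n * (1/(n:ℝ)) = 1 := by
      rw [show Ico 1 3 = {1, 2} from rfl]
      simp [ch_eq]
    have := (abs_le.1 (ch_tail 3 (N+1) (by norm_num) (by omega))).1
    rw [e]; push_cast at this; linarith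
  have hdiff : ∀ m ∈ Ioc 0 N, |∑ k ∈ Ioc 0 (N/m), ch k * (1/(k:ℝ)) - H| ≤ m / N := by
    intro m hm
    have hm' := Finset.mem_Ioc.1 hm
    have hm0 : (0:ℝ) < m := by exact_mod_cast hm'.1
    have hle : N / m ≤ N := Nat.div_le_self _ _
    have e : H = ∑ k ∈ Ioc 0 (N/m), ch k * (1/(k:ℝ)) + ∑ k ∈ Ico (N/m+1) (N+1), ch k * (1/(k:ℝ)) := by
      rw [hH, Ioc_eq_Ico, Ioc_eq_Ico, Finset.sum_Ico_consecutive _ (Nat.le_add_left _ _) (by omega)]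
    rw [e, sub_add_cancel_left, abs_neg]
    refine (ch_tail _ _ (Nat.le_add_left _ _) (by omega)).trans ?_
    have := Nat.lt_floor_add_one ((N:ℝ)/m)
    rw [Nat.floor_div_natCast, Nat.floor_natCast] at this
    push_cast
    rw [div_le_div_iff₀ (by positivity) hN', one_mul]
    rw [div_lt_iff₀ hm0] at this
    linarith
  have e1 : H * ∑ m ∈ Ioc 0 N, ch m * (1 / (m:ℝ)) * Λ m
      = ∑ n ∈ Ioc 0 N, ch n * (1/(n:ℝ)) * Real.log n
       - ∑ m ∈ Ioc 0 N, ch m * (1/(m:ℝ)) * Λ m * (∑ k ∈ Ioc 0 (N/m), ch k * (1/(k:ℝ)) - H) := by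
    rw [h, ← Finset.sum_sub_distrib, Finset.mul_sum]
    apply Finset.sum_congr rfl
    intros; ring
  have h2 : |∑ m ∈ Ioc 0 N, ch m * (1/(m:ℝ)) * Λ m * (∑ k ∈ Ioc 0 (N/m), ch k * (1/(k:ℝ)) - H)|
      ≤ 6 := by
    refine (Finset.abs_sum_le_sum_abs _ _).trans ?_
    calc _ ≤ ∑ m ∈ Ioc 0 N, Λ m / N := by
          apply Finset.sum_le_sum
          intro m hm
          have hm' := Finset.mem_Ioc.1 hm
          have hm0 : (0:ℝ) < m := by exact_mod_cast hm'.1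
          have hL := ArithmeticFunction.vonMangoldt_nonneg (n := m)
          rw [abs_mul, abs_mul, abs_mul, abs_of_nonneg hL, abs_of_pos (show 0 < 1/(m:ℝ) by positivity)]
          calc _ ≤ 1 * (1/(m:ℝ)) * Λ m * (m / N) := by
                gcongr
                · exact ch_abs m
                · exact hdiff m hm
            _ = _ := by field_simp
      _ ≤ 6 := by
          rw [← Finset.sum_div, div_le_iff₀ hN']
          exact psi_bd N
  have h3 := ch_log N
  have h4 : H * |∑ m ∈ Ioc 0 N, ch m * (1 / (m:ℝ)) * Λ m| ≤ 7 := by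
    rw [← abs_of_pos (show 0 < H by linarith), ← abs_mul, e1]
    refine (abs_sub _ _).trans ?_
    linarith
  nlinarith [abs_nonneg (∑ m ∈ Ioc 0 N, ch m * (1 / (m:ℝ)) * Λ m)]

lemma nonprime_lambda : ∃ C : ℝ, 0 ≤ C ∧ ∀ N : ℕ,
    ∑ n ∈ Ioc 0 N, (if n.Prime then 0 else Λ n) / n ≤ C := by
  have h := ArithmeticFunction.vonMangoldt.summable_residueClass_non_primes_div (q := 1) 0
  have e : (fun n : ℕ => (if n.Prime then 0 else 
      ArithmeticFunction.vonMangoldt.residueClass (0 : ZMod 1) n) / (n:ℝ)) 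
      = fun n : ℕ => (if n.Prime then 0 else Λ n) / (n:ℝ) := by
    funext n
    congr 2
    unfold ArithmeticFunction.vonMangoldt.residueClass
    rw [Set.indicator_of_mem]
    exact Subsingleton.elim _ _
  rw [e] at h
  have h0 : ∀ n : ℕ, 0 ≤ (if n.Prime then 0 else Λ n) / (n:ℝ) := by
    intro n
    split_ifs
    · simp
    · exact div_nonneg ArithmeticFunction.vonMangoldt_nonneg (by positivity)
  refine ⟨_, tsum_nonneg h0, fun N => h.sum_le_tsum _ (fun i _ => h0 i)⟩

end PC

section PC2
open Finset
open scoped ArithmeticFunction.vonMangoldt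

/-- `log p / p` on primes -/
noncomputable def lgp (n : ℕ) : ℝ := if n.Prime then Real.log n / n else 0

lemma lgp_eq (n : ℕ) : lgp n = Λ n / n - (if n.Prime then 0 else Λ n) / n := by
  unfold lgp
  split_ifs with h
  · rw [ArithmeticFunction.vonMangoldt_apply_prime h]; simp
  · simp

lemma mertens_prime : ∃ C : ℝ, 0 ≤ C ∧ ∀ N : ℕ, 1 ≤ N → |∑ n ∈ Ioc 0 N, lgp n - Real.log N| ≤ C := by
  obtain ⟨C, hC, h⟩ := nonprime_lambda
  refine ⟨C + 6, by linarith, fun N hN => ?_⟩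
  simp_rw [lgp_eq]
  rw [Finset.sum_sub_distrib]
  have h1 := abs_le.1 (mertens_lambda N hN)
  have h2 := h N
  have h3 : 0 ≤ ∑ n ∈ Ioc 0 N, (if n.Prime then 0 else Λ n) / (n:ℝ) := by
    apply Finset.sum_nonneg
    intro n _
    split_ifs
    · simp
    · exact div_nonneg ArithmeticFunction.vonMangoldt_nonneg (by positivity)
  rw [abs_le]; constructor <;> linarith [h1.1, h1.2]

lemma mertens_chi_prime : ∃ C : ℝ, 0 ≤ C ∧ ∀ N : ℕ, |∑ n ∈ Ioc 0 N, ch n * lgp n| ≤ C := by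
  obtain ⟨C, hC, h⟩ := nonprime_lambda
  refine ⟨C + 12, by linarith, fun N => ?_⟩
  simp_rw [lgp_eq, mul_sub]
  rw [Finset.sum_sub_distrib]
  refine (abs_sub _ _).trans ?_
  have h1 := mertens_chi_lambda N
  have e : ∑ m ∈ Ioc 0 N, ch m * (1 / (m:ℝ)) * Λ m = ∑ m ∈ Ioc 0 N, ch m * (Λ m / m) := by
    apply Finset.sum_congr rfl; intros; ring
  rw [e] at h1
  have h2 : |∑ n ∈ Ioc 0 N, ch n * ((if n.Prime then 0 else Λ n) / (n:ℝ))| ≤ C := by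
    refine (Finset.abs_sum_le_sum_abs _ _).trans (le_trans ?_ (h N))
    apply Finset.sum_le_sum
    intro n _
    have h0 : 0 ≤ (if n.Prime then 0 else Λ n) / (n:ℝ) := by
      split_ifs
      · simp
      · exact div_nonneg ArithmeticFunction.vonMangoldt_nonneg (by positivity)
    rw [abs_mul, abs_of_nonneg h0]
    exact mul_le_of_le_one_left h0 (ch_abs n)
  linarith

lemma harm_bd (N : ℕ) (hN : 1 ≤ N) : |∑ n ∈ Ioc 0 N, 1 / (n:ℝ) - Real.log N| ≤ 1 := by
  have h1 := log_add_one_le_harmonic N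
  have h2 := harmonic_le_one_add_log N
  have e : ((harmonic N : ℚ) : ℝ) = ∑ n ∈ Ioc 0 N, 1 / (n:ℝ) := by
    rw [harmonic_eq_sum_Icc]; push_cast
    rw [show Icc 1 N = Ioc 0 N from by ext; simp; omega]
    simp
  rw [e] at h1 h2
  have h3 : Real.log N ≤ Real.log ((N+1:ℕ):ℝ) := by
    apply Real.log_le_log (by exact_mod_cast hN); push_cast; linarith
  rw [abs_le]; constructor <;> linarith

lemma sum_Ico_Ioc (c : ℕ → ℝ) (m k : ℕ) (hm : 2 ≤ m) (hk : m ≤ k) :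
    ∑ i ∈ Ico m k, c i = ∑ i ∈ Ioc 0 (k-1), c i - ∑ i ∈ Ioc 0 (m-1), c i := by
  rw [Ioc_eq_Ico, Ioc_eq_Ico, show k - 1 + 1 = k by omega, show m - 1 + 1 = m by omega,
    ← Finset.sum_Ico_consecutive c (show 1 ≤ m by omega) hk]
  ring

lemma inv_log_props (m : ℕ) (hm : 2 ≤ m) :
   (∀ n ≥ m, 0 ≤ 1 / Real.log (n:ℝ)) ∧ (∀ n ≥ m, 1 / Real.log ((n+1:ℕ):ℝ) ≤ 1 / Real.log (n:ℝ)) := by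
  refine ⟨fun n _ => by positivity, fun n hn => ?_⟩
  have h2 : (2:ℝ) ≤ n := by exact_mod_cast hm.trans hn
  have : 0 < Real.log n := Real.log_pos (by linarith)
  apply one_div_le_one_div_of_le this
  apply Real.log_le_log (by linarith)
  push_cast; linarith

lemma prime_recip_sum : ∃ B : ℝ, 0 ≤ B ∧ ∀ m k : ℕ, 2 ≤ m → m ≤ k →
    |∑ n ∈ Ico m k, (if n.Prime then 1 / (n:ℝ) else 0) - ∑ n ∈ Ico m k, 1 / (n * Real.log n)| 
      ≤ B / Real.log m := by
  obtain ⟨C, hC, h⟩ := mertens_prime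
  refine ⟨2 * (C + 1), by linarith, fun m k hm hk => ?_⟩
  have hQ : ∀ N : ℕ, 1 ≤ N → |∑ n ∈ Ioc 0 N, (lgp n - 1 / (n:ℝ))| ≤ C + 1 := by
    intro N hN
    rw [Finset.sum_sub_distrib]
    have h1 := abs_le.1 (h N hN)
    have h2 := abs_le.1 (harm_bd N hN)
    rw [abs_le]; constructor <;> linarith [h1.1, h1.2, h2.1, h2.2]
  have hp := inv_log_props m hm
  have := abel_bound (fun n => 1 / Real.log (n:ℝ)) (fun n => lgp n - 1 / (n:ℝ)) m (2 * (C+1)) hp.1 hp.2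
    (fun k hk => by
      rw [sum_Ico_Ioc _ m k hm hk]
      refine (abs_sub _ _).trans ?_
      linarith [hQ (k-1) (by omega), hQ (m-1) (by omega)]) k hk
  rw [← Finset.sum_sub_distrib]
  rw [mul_one_div] at this
  refine le_trans (le_of_eq ?_) this
  congr 1
  apply Finset.sum_congr rfl
  intro n hn
  have hn2 : 2 ≤ n := hm.trans (Finset.mem_Ico.1 hn).1
  have h2 : (2:ℝ) ≤ n := by exact_mod_cast hn2
  have : 0 < Real.log n := Real.log_pos (by linarith)
  unfold lgp
  split_ifs
  · field_simp
  · field_simp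
    ring

lemma chi_recip_sum : ∃ B : ℝ, 0 ≤ B ∧ ∀ k : ℕ, 2 ≤ k →
    |∑ n ∈ Ico 2 k, ch n * (if n.Prime then 1 / (n:ℝ) else 0)| ≤ B := by
  obtain ⟨C, hC, h⟩ := mertens_chi_prime
  have hl2 : 0 < Real.log 2 := Real.log_pos (by norm_num)
  refine ⟨2 * C * (1 / Real.log 2), by positivity, fun k hk => ?_⟩
  have hp := inv_log_props 2 le_rfl
  have := abel_bound (fun n => 1 / Real.log (n:ℝ)) (fun n => ch n * lgp n) 2 (2 * C) hp.1 hp.2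
    (fun k hk => by
      rw [sum_Ico_Ioc _ 2 k le_rfl hk]
      refine (abs_sub _ _).trans ?_
      linarith [h (k-1), h (2-1)]) k hk
  refine le_trans (le_of_eq ?_) this
  congr 1
  apply Finset.sum_congr rfl
  intro n hn
  have hn2 : 2 ≤ n := (Finset.mem_Ico.1 hn).1
  have h2 : (2:ℝ) ≤ n := by exact_mod_cast hn2
  have : 0 < Real.log n := Real.log_pos (by linarith)
  unfold lgp
  split_ifs
  · field_simp
  · simp

lemma loglog_step (n : ℕ) (hn : 2 ≤ n) :
    1 / (((n+1:ℕ):ℝ) * Real.log ((n+1:ℕ):ℝ)) ≤ 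
      Real.log (Real.log ((n+1:ℕ):ℝ)) - Real.log (Real.log n) ∧
    Real.log (Real.log ((n+1:ℕ):ℝ)) - Real.log (Real.log n) ≤ 1 / ((n:ℝ) * Real.log n) := by
  have h2 : (2:ℝ) ≤ n := by exact_mod_cast hn
  push_cast
  have ha : 0 < Real.log n := Real.log_pos (by linarith)
  have hb : 0 < Real.log ((n:ℝ)+1) := Real.log_pos (by linarith)
  set a := Real.log n with hadef
  set b := Real.log ((n:ℝ)+1) with hbdef
  have hba1 : b - a ≤ 1 / n := by
    rw [hadef, hbdef, ← Real.log_div (by linarith) (by linarith)]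
    have := Real.log_le_sub_one_of_pos (x := ((n:ℝ)+1) / n) (by positivity)
    refine this.trans (le_of_eq ?_)
    field_simp; ring
  have hba2 : 1 / ((n:ℝ)+1) ≤ b - a := by
    rw [hadef, hbdef, ← Real.log_div (by linarith) (by linarith)]
    have := Real.one_sub_inv_le_log_of_pos (x := ((n:ℝ)+1) / n) (by positivity)
    refine le_trans (le_of_eq ?_) this
    field_simp; ring
  rw [← Real.log_div hb.ne' ha.ne']
  constructor
  · refine le_trans ?_ (Real.one_sub_inv_le_log_of_pos (x := b/a) (by positivity))
    have e : 1 - (b/a)⁻¹ = (b - a) / b := by field_simp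
    rw [e, one_div, mul_inv, div_eq_mul_inv, ← one_div]
    gcongr
  · refine (Real.log_le_sub_one_of_pos (x := b/a) (by positivity)).trans ?_
    have e : b/a - 1 = (b - a) / a := by field_simp
    rw [e, one_div, mul_inv, div_eq_mul_inv, ← one_div]
    rw [← one_div (n:ℝ)]
    gcongr

lemma sum_inv_log_ub (m k : ℕ) (hm : 2 ≤ m) (hk : m ≤ k) :
    ∑ n ∈ Ico m (k+1), 1 / ((n:ℝ) * Real.log n) ≤ 
      1 / ((m:ℝ) * Real.log m) + (Real.log (Real.log k) - Real.log (Real.log m)) := by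
  induction k, hk using Nat.le_induction with
  | base => simp
  | succ k hk ih =>
    rw [Finset.sum_Ico_succ_top (by omega)]
    have := (loglog_step k (by omega)).1
    linarith

lemma sum_inv_log_lb (m k : ℕ) (hm : 2 ≤ m) (hk : m ≤ k) :
    Real.log (Real.log k) - Real.log (Real.log m) ≤ ∑ n ∈ Ico m k, 1 / ((n:ℝ) * Real.log n) := by
  induction k, hk using Nat.le_induction with
  | base => simp
  | succ k hk ih =>
    rw [Finset.sum_Ico_succ_top (by omega)]
    have := (loglog_step k (by omega)).2
    linarith

/-- reciprocals of primes in `(√u, u]` -/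
lemma block_recip : ∃ w : ℝ, 4 ≤ w ∧ ∀ u : ℝ, w ≤ u → ∀ T : Finset ℕ,
    (∀ p ∈ T, p.Prime ∧ Real.sqrt u < p ∧ (p:ℝ) ≤ u) → ∑ p ∈ T, 1 / (p:ℝ) ≤ 1 := by
  obtain ⟨B, hB, h⟩ := prime_recip_sum
  refine ⟨max 4 (Real.exp (8 * (B + 1))), le_max_left _ _, fun u hu T hT => ?_⟩
  have hu4 : 4 ≤ u := (le_max_left _ _).trans hu
  have hue : Real.exp (8 * (B + 1)) ≤ u := (le_max_right _ _).trans hu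
  have hlu : 8 * (B + 1) ≤ Real.log u := by
    rw [Real.le_log_iff_exp_le (by linarith)]; exact hue
  set m := ⌊Real.sqrt u⌋₊ + 1 with hm
  set k := ⌊u⌋₊ with hk
  have hs2 : 2 ≤ Real.sqrt u := by
    rw [Real.le_sqrt (by norm_num) (by linarith)]; linarith
  have hsm : Real.sqrt u < m := by rw [hm]; push_cast; exact Nat.lt_floor_add_one _
  have hm2 : 2 ≤ m := by
    have : (2:ℝ) < m := by linarith
    exact_mod_cast this.le
  have hTs : T ⊆ (Ico m (k+1)).filter Nat.Prime := by
    intro p hp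
    have := hT p hp
    rw [Finset.mem_filter, Finset.mem_Ico]
    refine ⟨⟨?_, ?_⟩, this.1⟩
    · rw [hm, Nat.succ_le_iff, Nat.floor_lt (by positivity)]; exact this.2.1
    · rw [Nat.lt_succ_iff, hk]; exact Nat.le_floor this.2.2
  have hmk : m ≤ k := by
    rw [hk]
    apply Nat.le_floor
    rw [hm]; push_cast
    have h1 := Nat.floor_le (Real.sqrt_nonneg u)
    have h2 := Real.sq_sqrt (show 0 ≤ u by linarith)
    nlinarith
  have hlm : Real.log u / 2 ≤ Real.log m := by
    rw [← Real.log_sqrt (by linarith)]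
    exact Real.log_le_log (by linarith) hsm.le
  have hlm0 : 0 < Real.log m := by linarith
  calc ∑ p ∈ T, 1 / (p:ℝ) ≤ ∑ p ∈ (Ico m (k+1)).filter Nat.Prime, 1 / (p:ℝ) := 
        Finset.sum_le_sum_of_subset_of_nonneg hTs (fun _ _ _ => by positivity)
    _ = ∑ n ∈ Ico m (k+1), (if n.Prime then 1 / (n:ℝ) else 0) := Finset.sum_filter _ _
    _ ≤ ∑ n ∈ Ico m (k+1), 1 / ((n:ℝ) * Real.log n) + B / Real.log m := by
        linarith [(abs_le.1 (h m (k+1) hm2 (by omega))).2]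
    _ ≤ 1 / ((m:ℝ) * Real.log m) + (Real.log (Real.log k) - Real.log (Real.log m)) 
        + B / Real.log m := by linarith [sum_inv_log_ub m k hm2 hmk]
    _ ≤ 1 := by
        have h1 : 1 / ((m:ℝ) * Real.log m) ≤ 1 / Real.log m := by
          apply one_div_le_one_div_of_le hlm0
          have : (1:ℝ) ≤ m := by exact_mod_cast (by omega : 1 ≤ m)
          nlinarith
        have h2 : (1 + B) / Real.log m ≤ 1 / 4 := by
          rw [div_le_iff₀ hlm0]; linarith
        have h3 : Real.log (Real.log k) ≤ Real.log (Real.log u) := by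
          have hk1 : (2:ℝ) ≤ k := by exact_mod_cast hm2.trans hmk
          apply Real.log_le_log (Real.log_pos (by linarith))
          exact Real.log_le_log (by linarith) (Nat.floor_le (by linarith))
        have h4 : Real.log (Real.log u) - Real.log 2 ≤ Real.log (Real.log m) := by
          rw [← Real.log_div (by linarith) (by norm_num)]
          exact Real.log_le_log (by linarith) hlm
        have h5 := Real.log_two_lt_d9
        have h6 : (1 + B) / Real.log m = 1 / Real.log m + B / Real.log m := by ring
        linarith

/-- primes `1 mod 4` -/
lemma mertens_one_mod_four : ∃ C : ℝ, 0 ≤ C ∧ ∀ z : ℝ, 2 ≤ z →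
    |∑ p ∈ (Icc 1 ⌊z⌋₊).filter (fun p => p.Prime ∧ p % 4 = 1), 2 / (p:ℝ) - Real.log (Real.log z)| 
      ≤ C := by
  obtain ⟨B, hB, h⟩ := prime_recip_sum
  obtain ⟨B', hB', h'⟩ := chi_recip_sum
  have hl2 : 0 < Real.log 2 := Real.log_pos (by norm_num)
  refine ⟨B / Real.log 2 + B' + 1 / 2 + (1 / (2 * Real.log 2) + |Real.log (Real.log 2)|),
    by positivity, fun z hz => ?_⟩
  set K := ⌊z⌋₊ with hK
  have hK2 : 2 ≤ K := Nat.le_floor (by exact_mod_cast hz)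
  have hK2' : (2:ℝ) ≤ K := by exact_mod_cast hK2
  have e : ∑ p ∈ (Icc 1 K).filter (fun p => p.Prime ∧ p % 4 = 1), 2 / (p:ℝ)
      = ∑ n ∈ Ico 2 (K+1), (if n.Prime then 1 / (n:ℝ) else 0)
       + ∑ n ∈ Ico 2 (K+1), ch n * (if n.Prime then 1 / (n:ℝ) else 0) - 1 / 2 := by
    have e2 : (1/2 : ℝ) = ∑ n ∈ Ico 2 (K+1), (if n = 2 then 1 / (n:ℝ) else 0) := by
      rw [Finset.sum_ite_eq', if_pos (by simp; omega)]; norm_num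
    rw [Finset.sum_filter, e2, ← Finset.sum_add_distrib, ← Finset.sum_sub_distrib,
      show Icc 1 K = Ico 1 (K+1) by ext; simp, Finset.sum_eq_sum_Ico_succ_bot (by omega)]
    simp only [Nat.not_prime_one, false_and, if_false, zero_add]
    apply Finset.sum_congr rfl
    intro n hn
    by_cases hp : n.Prime
    · rcases hp.eq_two_or_odd with rfl | ho
      · simp [ch_eq, Nat.prime_two]
      · have hn2 : n ≠ 2 := by rintro rfl; omega
        have : n % 4 = 1 ∨ n % 4 = 3 := by omega
        rcases this with h4 | h4
        · simp [ch_eq, hp, ho, h4, hn2]; ring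
        · simp [ch_eq, hp, ho, h4, hn2]
    · have hn2 : n ≠ 2 := by rintro rfl; exact hp Nat.prime_two
      simp [hp, hn2]
  rw [e]
  have h1 := abs_le.1 (h 2 (K+1) le_rfl (by omega))
  have h2 := abs_le.1 (h' (K+1) (by omega))
  have h3 := sum_inv_log_ub 2 K le_rfl hK2
  have h4 := sum_inv_log_lb 2 (K+1) le_rfl (by omega)
  have h5 : Real.log (Real.log K) ≤ Real.log (Real.log z) := by
    apply Real.log_le_log (Real.log_pos (by linarith))
    exact Real.log_le_log (by linarith) (Nat.floor_le (by linarith))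
  have h6 : Real.log (Real.log z) ≤ Real.log (Real.log ((K+1:ℕ):ℝ)) := by
    apply Real.log_le_log (Real.log_pos (by linarith))
    apply Real.log_le_log (by linarith)
    push_cast; exact (Nat.lt_floor_add_one z).le
  have h7 := neg_abs_le (Real.log (Real.log 2))
  have h8 := le_abs_self (Real.log (Real.log 2))
  have h9 : 0 ≤ 1 / (2 * Real.log 2) := by positivity
  push_cast at *
  rw [abs_le]
  constructor <;> linarith [h1.1, h1.2, h2.1, h2.2]

end PC2

section PD
open Finset

/-- number of solutions of `r^2+1=0` mod `m` -/
noncomputable def rho (m : ℕ) : ℕ := Nat.card {r : ZMod m // r ^ 2 + 1 = 0}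

lemma rho_mul {m n : ℕ} (h : m.Coprime n) : rho (m * n) = rho m * rho n := by
  unfold rho
  rw [← Nat.card_prod]
  let e := ZMod.chineseRemainder h
  refine Nat.card_congr (((e.toEquiv.subtypeEquiv (q := fun x : ZMod m × ZMod n => x.1^2+1 = 0 ∧ x.2^2+1=0) ?_)).trans
    (Equiv.subtypeProdEquivProd (p := fun r : ZMod m => r^2+1=0) (q := fun r : ZMod n => r^2+1=0)))
  intro r
  have h1 : e (r ^ 2 + 1) = (e r) ^ 2 + 1 := by simp
  rw [← map_eq_zero_iff e e.injective, h1, Prod.ext_iff]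
  rfl

lemma rho_one : rho 1 = 1 := by
  unfold rho
  rw [Nat.card_eq_one_iff_unique]
  exact ⟨⟨fun a b => Subtype.ext (Subsingleton.elim _ _)⟩, ⟨⟨0, Subsingleton.elim _ _⟩⟩⟩

lemma rho_two : rho 2 = 1 := by
  unfold rho
  rw [Nat.card_eq_fintype_card]
  decide

lemma rho_dvd_zero {d m : ℕ} (hd : d ∣ m) (h : ∀ r : ZMod d, r ^ 2 + 1 ≠ 0) : rho m = 0 := by
  unfold rho
  have : IsEmpty {r : ZMod m // r ^ 2 + 1 = 0} := by
    refine ⟨fun ⟨r, hr⟩ => h (ZMod.castHom hd (ZMod d) r) ?_⟩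
    rw [← map_pow, ← map_one (ZMod.castHom hd (ZMod d)), ← map_add, hr, map_zero]
  exact Nat.card_of_isEmpty

lemma rho_four {m : ℕ} (hd : 4 ∣ m) : rho m = 0 := rho_dvd_zero hd (by decide)

lemma rho_three {p m : ℕ} (hp : p.Prime) (h3 : p % 4 = 3) (hd : p ∣ m) : rho m = 0 := by
  have := Fact.mk hp
  refine rho_dvd_zero hd fun r hr => ?_
  exact ZMod.mod_four_ne_three_of_sq_eq_neg_one (p := p) (y := r) (eq_neg_of_add_eq_zero_left hr) h3

lemma exists_root {p k : ℕ} (hp : p.Prime) (h1 : p % 4 = 1) (hk : 1 ≤ k) :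
    ∃ s : ZMod (p ^ k), s ^ 2 + 1 = 0 := by
  have := Fact.mk hp
  obtain ⟨y, hy⟩ := (ZMod.exists_sq_eq_neg_one_iff (p := p)).2 (by omega)
  obtain ⟨r, rfl⟩ := ZMod.intCast_surjective y
  have hdv : (p:ℤ) ∣ r ^ 2 - (-1) := by
    rw [← ZMod.intCast_zmod_eq_zero_iff_dvd]
    push_cast
    rw [hy]; ring
  have := dvd_sub_pow_of_dvd_sub hdv (k-1)
  refine ⟨((r ^ (p^(k-1)) : ℤ) : ZMod (p^k)), ?_⟩
  have ho : Odd (p ^ (k-1)) := Odd.pow (Nat.odd_iff.2 (by omega))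
  rw [ho.neg_one_pow, show k - 1 + 1 = k by omega] at this
  have h2 : (((r ^ (p^(k-1))) ^ 2 + 1 : ℤ) : ZMod (p^k)) = 0 := by
    rw [ZMod.intCast_zmod_eq_zero_iff_dvd]
    push_cast
    rw [sub_neg_eq_add] at this
    rwa [← pow_mul, mul_comm, pow_mul]
  exact_mod_cast h2

lemma rho_prime_pow {p k : ℕ} (hp : p.Prime) (h1 : p % 4 = 1) (hk : 1 ≤ k) : rho (p ^ k) = 2 := by
  obtain ⟨s, hs⟩ := exists_root hp h1 hk
  have hpi : Prime (p : ℤ) := Nat.prime_iff_prime_int.1 hp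
  have hpk : (p:ℤ) ∣ ((p^k : ℕ) : ℤ) := by push_cast; exact dvd_pow_self _ (by omega)
  have hun : ∀ R : ℤ, ((R : ZMod (p^k)) ^ 2 + 1 = 0) → ¬ (p:ℤ) ∣ 2 * R := by
    intro R hR hd
    have h3 : (((R^2+1 : ℤ)) : ZMod (p^k)) = 0 := by push_cast; exact hR
    rw [ZMod.intCast_zmod_eq_zero_iff_dvd] at h3
    have h4 := hpk.trans h3
    rcases hpi.dvd_or_dvd hd with h5 | h5
    · have : p ∣ 2 := by exact_mod_cast h5
      have := Nat.le_of_dvd (by norm_num) this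
      have := hp.two_le
      omega
    · have : (p:ℤ) ∣ 1 := by
        have := dvd_sub h4 (dvd_pow h5 (two_ne_zero))
        simpa using this
      exact hpi.not_dvd_one this
  obtain ⟨S, rfl⟩ := ZMod.intCast_surjective s
  unfold rho
  have hset : ∀ r : ZMod (p^k), r ^ 2 + 1 = 0 ↔ r = (S : ZMod (p^k)) ∨ r = -(S : ZMod (p^k)) := by
    intro r
    constructor
    · intro hr
      obtain ⟨R, rfl⟩ := ZMod.intCast_surjective r
      have hz : (((R - S) * (R + S) : ℤ) : ZMod (p^k)) = 0 := by
        push_cast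
        linear_combination hr - hs
      rw [ZMod.intCast_zmod_eq_zero_iff_dvd] at hz
      push_cast at hz
      by_cases hd : (p:ℤ) ∣ R - S
      · by_cases hd2 : (p:ℤ) ∣ R + S
        · exact absurd (by have := dvd_add hd hd2; ring_nf at this ⊢; exact this) (hun R hr)
        · left
          have hc : IsCoprime ((p:ℤ)^k) (R+S) := IsCoprime.pow_left ((Prime.coprime_iff_not_dvd hpi).2 hd2)
          have := hc.dvd_of_dvd_mul_right hz
          have h5 : (((R - S : ℤ)) : ZMod (p^k)) = 0 := by
            rw [ZMod.intCast_zmod_eq_zero_iff_dvd]; exact_mod_cast this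
          push_cast at h5
          exact sub_eq_zero.1 h5
      · right
        have hc : IsCoprime ((p:ℤ)^k) (R-S) := IsCoprime.pow_left ((Prime.coprime_iff_not_dvd hpi).2 hd)
        have := hc.dvd_of_dvd_mul_left hz
        have h5 : (((R + S : ℤ)) : ZMod (p^k)) = 0 := by
          rw [ZMod.intCast_zmod_eq_zero_iff_dvd]; exact_mod_cast this
        push_cast at h5
        exact eq_neg_of_add_eq_zero_left h5
    · rintro (rfl | rfl)
      · exact hs
      · rw [neg_sq]; exact hs
  rw [Nat.card_eq_two_iff]
  refine ⟨⟨(S : ZMod (p^k)), hs⟩, ⟨-(S : ZMod (p^k)), by rw [neg_sq]; exact hs⟩, ?_, ?_⟩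
  · intro h
    have h6 : (S : ZMod (p^k)) = -S := congrArg Subtype.val h
    have h7 : ((2 * S : ℤ) : ZMod (p^k)) = 0 := by push_cast; linear_combination h6
    rw [ZMod.intCast_zmod_eq_zero_iff_dvd] at h7
    exact hun S hs (hpk.trans h7)
  · ext ⟨r, hr⟩
    have := (hset r).1 hr
    simpa [Subtype.ext_iff] using this

/-- local density numerators -/
def hh (a p : ℕ) : ℕ :=
  if p % 4 = 3 then 0 else if p = 2 then (if 2 ∣ a then 0 else 1) else if p ∣ a then 1 else 2

lemma hh_le (a p : ℕ) : hh a p ≤ 2 := by unfold hh; split_ifs <;> omega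

lemma rho_step {m p : ℕ} (hm : m ≠ 0) (hp : p.Prime) : rho (m * p) = rho m * hh m p := by
  unfold hh
  split_ifs with h3 h2 h2a hpa
  · rw [rho_three hp h3 (dvd_mul_left _ _), mul_zero]
  · rw [rho_four, mul_zero]
    obtain ⟨t, rfl⟩ := h2a
    exact ⟨t, by rw [h2]; ring⟩
  · subst h2
    rw [rho_mul, rho_two]
    exact ((Nat.Prime.coprime_iff_not_dvd Nat.prime_two).2 h2a).symm
  · have h1 : p % 4 = 1 := by
      rcases hp.eq_two_or_odd with h | h <;> omega
    obtain ⟨k, t, ht, rfl⟩ := Nat.exists_eq_pow_mul_and_not_dvd hm p hp.ne_one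
    have hk : 1 ≤ k := by
      rcases Nat.eq_zero_or_pos k with h | h
      · subst h; simp at hpa; exact absurd hpa ht
      · exact h
    have hc : ∀ j, (p^j).Coprime t := fun j => Nat.Coprime.pow_left _ ((Nat.Prime.coprime_iff_not_dvd hp).2 ht)
    rw [show p^k*t*p = p^(k+1)*t by ring, rho_mul (hc _), rho_mul (hc _), rho_prime_pow hp h1 hk,
      rho_prime_pow hp h1 (by omega), mul_one]
  · have h1 : p % 4 = 1 := by
      rcases hp.eq_two_or_odd with h | h <;> omega
    rw [rho_mul ((Nat.Prime.coprime_iff_not_dvd hp).2 hpa).symm]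
    have := rho_prime_pow hp h1 le_rfl
    rw [pow_one] at this
    rw [this]

lemma rho_prod {a : ℕ} (ha : a ≠ 0) (D : Finset ℕ) (hD : ∀ p ∈ D, p.Prime) :
    rho (a * ∏ p ∈ D, p) = rho a * ∏ p ∈ D, hh a p := by
  induction D using Finset.induction_on with
  | empty => simp
  | insert q D hq ih =>
    have hDp : ∀ p ∈ D, p.Prime := fun p hp => hD p (mem_insert_of_mem hp)
    have hqp : q.Prime := hD q (mem_insert_self _ _)
    rw [prod_insert hq, prod_insert hq, show a * (q * ∏ p ∈ D, p) = (a * ∏ p ∈ D, p) * q by ring,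
      rho_step (mul_ne_zero ha (prod_ne_zero_iff.2 fun p hp => (hDp p hp).ne_zero)) hqp, ih hDp]
    have key : ∀ r : ℕ, r = q → (r ∣ a * ∏ p ∈ D, p ↔ r ∣ a) := by
      rintro r rfl
      constructor
      · intro h
        rcases hqp.dvd_mul.1 h with h | h
        · exact h
        · exfalso
          obtain ⟨p, hp, hd⟩ := (hqp.prime.dvd_finsetProd_iff _).1 h
          rw [(Nat.prime_dvd_prime_iff_eq hqp (hDp p hp)).1 hd] at hq
          exact hq hp
      · exact fun h => h.mul_right _
    have : hh (a * ∏ p ∈ D, p) q = hh a q := by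
      unfold hh
      by_cases h2 : q = 2
      · simp only [key q rfl, key 2 h2.symm]
      · simp only [key q rfl, h2, if_false]
    rw [this]; ring

lemma rho_two_pow {a : ℕ} (ha : a ≠ 0) (h4 : ¬ 4 ∣ a) (h3 : ∀ p : ℕ, p.Prime → p ∣ a → p % 4 ≠ 3) :
    rho a * (if 2 ∣ a then 2 else 1) = 2 ^ a.primeFactors.card := by
  revert ha h4 h3
  induction a using Nat.recOnPosPrimePosCoprime with
  | prime_pow p n hp hn =>
    intro ha h4 h3
    rw [Nat.primeFactors_prime_pow hn.ne' hp, card_singleton, pow_one]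
    rcases hp.eq_two_or_odd with h | h
    · subst h
      have : n = 1 := by
        by_contra hne
        exact h4 (pow_dvd_pow 2 (show 2 ≤ n by omega))
      subst this
      simp [rho_two]
    · have h1 : p % 4 = 1 := by
        have := h3 p hp (dvd_pow_self _ hn.ne')
        omega
      have : ¬ 2 ∣ p ^ n := by
        intro h
        have := Nat.prime_two.dvd_of_dvd_pow h
        omega
      rw [if_neg this, rho_prime_pow hp h1 hn]
  | zero => intro h; exact absurd rfl h
  | one => intro _ _ _; simp [rho_one]
  | coprime a b ha hb hab iha ihb =>
    intro hne h4 h3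
    have e1 := iha (by omega) (fun h => h4 (h.mul_right _)) (fun p hp h => h3 p hp (h.mul_right _))
    have e2 := ihb (by omega) (fun h => h4 (h.mul_left _)) (fun p hp h => h3 p hp (h.mul_left _))
    rw [hab.primeFactors_mul, card_union_of_disjoint hab.disjoint_primeFactors, pow_add, ← e1, ← e2, rho_mul hab]
    have h22 : ¬ (2 ∣ a ∧ 2 ∣ b) := by
      rintro ⟨h, h'⟩
      exact h4 (mul_dvd_mul h h')
    simp only [Nat.prime_two.dvd_mul]
    by_cases p1 : 2 ∣ a <;> by_cases p2 : 2 ∣ b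
    · exact absurd ⟨p1,p2⟩ h22
    · simp [p1,p2]; ring
    · simp [p1,p2]; ring
    · simp [p1,p2]

lemma M_cond {a n : ℕ} (h : a ∣ n ^ 2 + 1) : ¬ 4 ∣ a ∧ ∀ p : ℕ, p.Prime → p ∣ a → p % 4 ≠ 3 := by
  constructor
  · intro h4
    have := h4.trans h
    have h5 : n % 4 = 0 ∨ n % 4 = 1 ∨ n % 4 = 2 ∨ n % 4 = 3 := by omega
    have h6 : (n^2+1) % 4 = 0 := Nat.mod_eq_zero_of_dvd this
    rcases h5 with h5 | h5 | h5 | h5 <;> simp [Nat.add_mod, Nat.pow_mod, h5] at h6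
  · intro p hp hpa
    have := Fact.mk hp
    have h5 : (p : ℕ) ∣ n^2+1 := hpa.trans h
    have h6 : ((n^2+1 : ℕ) : ZMod p) = 0 := (ZMod.natCast_eq_zero_iff _ _).2 h5
    push_cast at h6
    exact ZMod.mod_four_ne_three_of_sq_eq_neg_one (eq_neg_of_add_eq_zero_left h6)

lemma count_res (N m v : ℕ) (hm : 0 < m) :
    |(((Icc 1 N).filter (fun n => n ≡ v [MOD m])).card : ℝ) - (N:ℝ)/m| ≤ 1 := by
  have h1 := Nat.Ioc_filter_modEq_card 0 N hm v
  have h2 : Ioc 0 N = Icc 1 N := rfl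
  rw [h2] at h1
  have hle : ⌊((0:ℕ) - v) / (m : ℚ)⌋ ≤ ⌊((N:ℕ) - v) / (m : ℚ)⌋ := by
    apply Int.floor_mono; gcongr; simp
  rw [max_eq_left (by omega)] at h1
  have h3 := Int.floor_le (((0:ℕ) - v) / (m : ℚ))
  have h4 := Int.lt_floor_add_one (((0:ℕ) - v) / (m : ℚ))
  have h5 := Int.floor_le (((N:ℕ) - v) / (m : ℚ))
  have h6 := Int.lt_floor_add_one (((N:ℕ) - v) / (m : ℚ))
  have h7 : (((N:ℕ) - v) / (m : ℚ)) = (((0:ℕ) - v) / (m : ℚ)) + N/m := by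
    push_cast; ring
  rw [h7] at h1 h5 h6
  have h8 : |(((Icc 1 N).filter (fun n => n ≡ v [MOD m])).card : ℚ) - (N:ℚ)/m| ≤ 1 := by
    have : (((Icc 1 N).filter (fun n => n ≡ v [MOD m])).card : ℚ) = (((((Icc 1 N).filter (fun n => n ≡ v [MOD m])).card : ℕ) : ℤ) : ℚ) := by simp
    rw [this, h1, abs_le]
    push_cast at *
    constructor <;> linarith
  have h9 := (Rat.cast_le (K := ℝ)).2 h8
  push_cast at h9
  exact h9

lemma count_rho (x : ℝ) (hx : 0 ≤ x) (m : ℕ) (hm : 0 < m) :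
    |(((Icc 1 ⌊x⌋₊).filter (fun n => m ∣ n ^ 2 + 1)).card : ℝ) - x * (rho m / m)| ≤ 2 * rho m := by
  have : NeZero m := ⟨hm.ne'⟩
  classical
  let S : Finset (ZMod m) := univ.filter (fun r => r ^ 2 + 1 = 0)
  have hS : rho m = S.card := by
    unfold rho
    rw [Nat.card_eq_fintype_card, Fintype.card_subtype]
  have hmap : ∀ n ∈ (Icc 1 ⌊x⌋₊).filter (fun n => m ∣ n ^ 2 + 1), (n : ZMod m) ∈ S := by
    intro n hn
    have := (mem_filter.1 hn).2
    rw [← ZMod.natCast_eq_zero_iff] at this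
    push_cast at this
    simp [S, this]
  rw [card_eq_sum_card_fiberwise hmap]
  have hf : ∀ r ∈ S, |((((Icc 1 ⌊x⌋₊).filter (fun n => m ∣ n ^ 2 + 1)).filter (fun n : ℕ => (n : ZMod m) = r)).card : ℝ) - x / m| ≤ 2 := by
    intro r hr
    have e : ((Icc 1 ⌊x⌋₊).filter (fun n => m ∣ n ^ 2 + 1)).filter (fun n : ℕ => (n : ZMod m) = r) =
        (Icc 1 ⌊x⌋₊).filter (fun n => n ≡ r.val [MOD m]) := by
      rw [filter_filter]
      apply filter_congr
      intro n _
      rw [← ZMod.natCast_eq_natCast_iff, ZMod.natCast_zmod_val]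
      constructor
      · exact fun h => h.2
      · intro h
        refine ⟨?_, h⟩
        rw [← ZMod.natCast_eq_zero_iff]
        push_cast
        rw [h]
        exact (mem_filter.1 hr).2
    rw [e]
    have h1 := count_res ⌊x⌋₊ m r.val hm
    have h2 := Nat.floor_le hx
    have h3 := Nat.lt_floor_add_one x
    have hm1 : (1:ℝ) ≤ m := by exact_mod_cast hm
    have h4 : |(⌊x⌋₊ : ℝ)/m - x/m| ≤ 1 := by
      rw [← sub_div, abs_div, abs_of_nonpos (by linarith), abs_of_nonneg (by linarith : (0:ℝ) ≤ m), div_le_one (by linarith)]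
      linarith
    calc _ ≤ _ := abs_sub_le _ ((⌊x⌋₊ : ℝ)/m) _
      _ ≤ 2 := by linarith
  have : x * (rho m / m) = ∑ r ∈ S, x / m := by
    rw [sum_const, nsmul_eq_mul, hS]; ring
  rw [this]
  push_cast
  rw [← sum_sub_distrib]
  calc _ ≤ _ := abs_sum_le_sum_abs _ _
    _ ≤ ∑ r ∈ S, (2:ℝ) := sum_le_sum hf
    _ = 2 * rho m := by rw [sum_const, nsmul_eq_mul, hS]; ring

/-- indicator -/
noncomputable def bb (a n p : ℕ) : ℝ := if p ∣ (n ^ 2 + 1) / a then 1 else 0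

lemma sieve_density (x : ℝ) (hx : 0 ≤ x) (a : ℕ) (ha : 0 < a) (D : Finset ℕ) (hD : ∀ p ∈ D, p.Prime) :
    |∑ n ∈ (Icc 1 ⌊x⌋₊).filter (fun n => a ∣ n ^ 2 + 1), ∏ p ∈ D, bb a n p
      - (x * (rho a / a)) * ∏ p ∈ D, ((hh a p : ℝ) / p)| ≤ (2 * rho a) * ∏ _p ∈ D, (2:ℝ) := by
  have hpos : 0 < a * ∏ p ∈ D, p := Nat.mul_pos ha (prod_pos fun p hp => (hD p hp).pos)
  have h := count_rho x hx (a * ∏ p ∈ D, p) hpos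
  have e1 : ∑ n ∈ (Icc 1 ⌊x⌋₊).filter (fun n => a ∣ n ^ 2 + 1), ∏ p ∈ D, bb a n p
      = (((Icc 1 ⌊x⌋₊).filter (fun n => a * ∏ p ∈ D, p ∣ n ^ 2 + 1)).card : ℝ) := by
    rw [card_filter, sum_filter]
    push_cast
    apply sum_congr rfl
    intro n _
    by_cases hd : a ∣ n ^ 2 + 1
    · rw [if_pos hd]
      obtain ⟨t, ht⟩ := hd
      have hq : (n^2+1)/a = t := by rw [ht]; exact Nat.mul_div_cancel_left _ ha
      simp only [bb, hq]
      rw [prod_ite_zero, prod_const_one]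
      refine if_congr ?_ rfl rfl
      rw [ht, Nat.mul_dvd_mul_iff_left ha]
      constructor
      · intro h
        exact prod_primes_dvd _ (fun p hp => (hD p hp).prime) h
      · intro h p hp
        exact (dvd_prod_of_mem _ hp).trans h
    · rw [if_neg hd, if_neg (fun h => hd ((dvd_mul_right _ _).trans h))]
  rw [e1]
  have e2 : x * (((rho (a * ∏ p ∈ D, p) : ℕ) : ℝ) / ((a * ∏ p ∈ D, p : ℕ) : ℝ)) =
     (x * (rho a / a)) * ∏ p ∈ D, ((hh a p : ℝ) / p) := by
    rw [rho_prod ha.ne' D hD, prod_div_distrib]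
    push_cast
    rw [mul_div_mul_comm]; ring
  rw [← e2]
  refine h.trans ?_
  rw [rho_prod ha.ne' D hD]
  push_cast
  rw [← mul_assoc]
  gcongr with p hp
  exact_mod_cast hh_le a p

end PD

section PE
open Finset

/-- primes up to `z` -/
noncomputable def PU (z : ℝ) : Finset ℕ := (Icc 1 ⌊z⌋₊).filter (fun p => p.Prime)

lemma mem_PU {z : ℝ} (hz : 0 ≤ z) {p : ℕ} : p ∈ PU z ↔ p.Prime ∧ (p:ℝ) ≤ z := by
  unfold PU
  rw [mem_filter, mem_Icc, Nat.le_floor_iff hz]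
  exact ⟨fun h => ⟨h.2, h.1.2⟩, fun h => ⟨⟨h.1.one_le, h.2⟩, h.1⟩⟩

/-- local densities -/
noncomputable def gg (a p : ℕ) : ℝ := (hh a p : ℝ) / p

lemma gg_nonneg (a p : ℕ) : 0 ≤ gg a p := by unfold gg; positivity

lemma gg_le_two_div (a p : ℕ) : gg a p ≤ 2 * (1 / (p:ℝ)) := by
  unfold gg
  rw [mul_one_div]
  have : (hh a p : ℝ) ≤ 2 := by exact_mod_cast hh_le a p
  gcongr

lemma gg_le_half (a : ℕ) {p : ℕ} (hp : p.Prime) : gg a p ≤ 1 / 2 := by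
  unfold gg
  have hp0 : (0:ℝ) < p := by exact_mod_cast hp.pos
  rw [div_le_iff₀ hp0]
  have : 2 * hh a p ≤ p := by
    have h2 := hp.two_le
    have h3 := hh_le a p
    by_cases h4 : 4 ≤ p
    · omega
    · have : p = 2 ∨ p = 3 := by omega
      rcases this with rfl | rfl
      · have : hh a 2 ≤ 1 := by
          unfold hh; split_ifs <;> omega
        omega
      · have : hh a 3 = 0 := by simp [hh]
        omega
  have : (2:ℝ) * hh a p ≤ p := by exact_mod_cast this
  linarith

lemma one_sub_ge_exp {u : ℝ} (h0 : 0 ≤ u) (h1 : u ≤ 1/2) : Real.exp (-(u + 2*u^2)) ≤ 1 - u := by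
  have hpos : 0 < 1 - u := by linarith
  have h2 := Real.add_one_le_exp (u / (1-u))
  have h3 : u / (1-u) + 1 = 1/(1-u) := by field_simp; ring
  rw [h3] at h2
  have h4 : u / (1-u) ≤ u + 2*u^2 := by
    rw [div_le_iff₀ hpos]; nlinarith [mul_nonneg h0 h0, mul_nonneg (mul_nonneg h0 h0) (by linarith : 0 ≤ 1 - 2*u)]
  have h5 : 1/(1-u) ≤ Real.exp (u+2*u^2) := h2.trans (Real.exp_le_exp.2 h4)
  rw [Real.exp_neg, inv_le_comm₀ (Real.exp_pos _) hpos, ← one_div]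
  exact h5

/-- combined local factor -/
noncomputable def ff (a p : ℕ) : ℝ := (1 - gg a p) * (if p ∣ a then 1 - 1 / (p:ℝ) else 1)

lemma ff_bounds {a p : ℕ} (hp : p.Prime) (h3 : ∀ p : ℕ, p.Prime → p ∣ a → p % 4 ≠ 3) :
    Real.exp (-((if p % 4 = 1 then 2/(p:ℝ) else 0) + 8 * (1/(p:ℝ)^2))) ≤ ff a p ∧
    ff a p ≤ Real.exp (-(if p % 4 = 1 then 2/(p:ℝ) else 0)) := by
  have hp0 : (0:ℝ) < p := by exact_mod_cast hp.pos
  rcases hp.eq_two_or_odd with h | hodd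
  · subst h
    have : ff a 2 = 1/2 := by
      unfold ff gg hh
      by_cases h : 2 ∣ a <;> simp [h] <;> norm_num
    rw [this]
    norm_num
    have h1 := Real.add_one_le_exp (1:ℝ)
    rw [Real.exp_neg, inv_le_comm₀ (Real.exp_pos _) (by norm_num)]
    have : Real.exp 2 = Real.exp 1 * Real.exp 1 := by rw [← Real.exp_add]; norm_num
    rw [this]; norm_num at h1 ⊢; nlinarith
  · have h2 : p ≠ 2 := by rintro rfl; omega
    have : p % 4 = 1 ∨ p % 4 = 3 := by omega
    rcases this with h1 | h1
    · rw [if_pos h1]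
      have hp5 : 5 ≤ p := by
        by_contra hlt
        have := hp.two_le
        interval_cases p <;> omega
      have hp5' : (5:ℝ) ≤ p := by exact_mod_cast hp5
      have hu : 2/(p:ℝ) ≤ 1/2 := by rw [div_le_iff₀ hp0]; linarith
      have hlo := one_sub_ge_exp (u := 2/(p:ℝ)) (by positivity) hu
      have e1 : 2/(p:ℝ) + 2*(2/(p:ℝ))^2 = 2/(p:ℝ) + 8*(1/(p:ℝ)^2) := by ring
      rw [e1] at hlo
      have hge : 1 - 2/(p:ℝ) ≤ ff a p ∧ ff a p ≤ (1 - 1/(p:ℝ))^2 := by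
        have hsq : (1 - 1/(p:ℝ))^2 = 1 - 2/(p:ℝ) + (1/(p:ℝ))^2 := by ring
        have := sq_nonneg (1/(p:ℝ))
        unfold ff gg hh
        by_cases h : p ∣ a
        · simp only [h1, h2, h, if_true, if_false, show ¬ (1 = 3) by norm_num]
          push_cast
          constructor <;> nlinarith
        · simp only [h1, h2, h, if_true, if_false, show ¬ (1 = 3) by norm_num]
          push_cast
          constructor <;> nlinarith
      refine ⟨hlo.trans hge.1, hge.2.trans ?_⟩
      have h5 : 1 - 1/(p:ℝ) ≤ Real.exp (-(1/(p:ℝ))) := by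
        have := Real.add_one_le_exp (-(1/(p:ℝ))); linarith
      have h6 : 0 ≤ 1 - 1/(p:ℝ) := by
        have : 1/(p:ℝ) ≤ 1 := by rw [div_le_one hp0]; linarith
        linarith
      calc (1 - 1/(p:ℝ))^2 ≤ (Real.exp (-(1/(p:ℝ))))^2 := by gcongr
        _ = _ := by rw [← Real.exp_nat_mul]; congr 1; push_cast; ring
    · have hpa : ¬ p ∣ a := fun h => h3 p hp h h1
      have : ff a p = 1 := by
        unfold ff gg hh
        simp [h1, hpa]
      rw [this, if_neg (by omega)]
      constructor
      · rw [Real.exp_le_one_iff]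
        have : 0 ≤ 8 * (1/(p:ℝ)^2) := by positivity
        linarith
      · simp

lemma prod_ff {a : ℕ} {z : ℝ} (ha : 0 < a) (hz : 2 ≤ z) (hP : ∀ p : ℕ, p.Prime → p ∣ a → (p:ℝ) ≤ z) :
    ∏ p ∈ PU z, ff a p = (∏ p ∈ PU z, (1 - gg a p)) * ((a.totient : ℝ) / a) := by
  unfold ff
  rw [prod_mul_distrib]
  congr 1
  rw [← prod_filter]
  have : (PU z).filter (fun p => p ∣ a) = a.primeFactors := by
    ext p
    rw [mem_filter, mem_PU (by linarith), Nat.mem_primeFactors]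
    exact ⟨fun h => ⟨h.1.1, h.2, ha.ne'⟩, fun h => ⟨⟨h.1, hP p h.1 h.2.1⟩, h.2.1⟩⟩
  rw [this]
  have h := Nat.totient_eq_mul_prod_factors a
  have h' : (a.totient : ℝ) = a * ∏ p ∈ a.primeFactors, (1 - (p:ℝ)⁻¹) := by
    have h5 := congrArg (Rat.cast (K := ℝ)) h
    push_cast at h5
    exact h5
  rw [h']
  have : (a:ℝ) ≠ 0 := by exact_mod_cast ha.ne'
  simp only [one_div]
  field_simp

lemma V_bounds : ∃ c1 : ℝ, 0 < c1 ∧ ∃ c2 : ℝ, 0 < c2 ∧ ∀ (a : ℕ) (z : ℝ), 0 < a → 2 ≤ z →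
    (∀ p : ℕ, p.Prime → p ∣ a → p % 4 ≠ 3) → (∀ p : ℕ, p.Prime → p ∣ a → (p:ℝ) ≤ z) →
    c1 / Real.log z ≤ (∏ p ∈ PU z, (1 - gg a p)) * ((a.totient : ℝ) / a) ∧
    (∏ p ∈ PU z, (1 - gg a p)) * ((a.totient : ℝ) / a) ≤ c2 / Real.log z := by
  obtain ⟨C, hC0, hC⟩ := mertens_one_mod_four
  have hsum : Summable (fun n : ℕ => 1 / (n:ℝ)^2) := Real.summable_one_div_nat_pow.2 (by norm_num)
  set S := ∑' n : ℕ, 1 / (n:ℝ)^2 with hS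
  refine ⟨Real.exp (-(C + 8*S)), Real.exp_pos _, Real.exp C, Real.exp_pos _, ?_⟩
  intro a z ha hz h3 hP
  rw [← prod_ff ha hz hP]
  have hpr : ∀ p ∈ PU z, p.Prime := fun p hp => (mem_filter.1 hp).2
  have hlog : 0 < Real.log z := Real.log_pos (by linarith)
  have hm := abs_le.1 (hC z hz)
  have e1 : ∑ p ∈ PU z, (if p % 4 = 1 then 2/(p:ℝ) else 0) =
     ∑ p∈(Icc 1 ⌊z⌋₊).filter (fun p => p.Prime ∧ p%4=1), 2/(p:ℝ) := by
    rw [← sum_filter, PU, filter_filter]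
  rw [← e1] at hm
  constructor
  · calc Real.exp (-(C + 8*S)) / Real.log z = Real.exp (-(Real.log (Real.log z) + C + 8*S)) := by
          rw [show -(Real.log (Real.log z) + C + 8*S) = -(C+8*S) - Real.log (Real.log z) by ring, Real.exp_sub, Real.exp_log hlog]
      _ ≤ Real.exp (∑ p ∈ PU z, -((if p % 4 = 1 then 2/(p:ℝ) else 0) + 8 * (1/(p:ℝ)^2))) := by
          rw [Real.exp_le_exp, sum_neg_distrib, sum_add_distrib, ← mul_sum]
          have : ∑ p ∈ PU z, 1/(p:ℝ)^2 ≤ S := hsum.sum_le_tsum _ (fun i _ => by positivity)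
          linarith [hm.2]
      _ ≤ _ := by
          rw [Real.exp_sum]
          exact prod_le_prod (fun p _ => (Real.exp_pos _).le) (fun p hp => (ff_bounds (hpr p hp) h3).1)
  · calc ∏ p ∈ PU z, ff a p ≤ Real.exp (∑ p ∈ PU z, -(if p % 4 = 1 then 2/(p:ℝ) else 0)) := by
          rw [Real.exp_sum]
          exact prod_le_prod (fun p hp => (Real.exp_pos _).le.trans (ff_bounds (hpr p hp) h3).1) (fun p hp => (ff_bounds (hpr p hp) h3).2)
      _ ≤ Real.exp (C - Real.log (Real.log z)) := by
          rw [Real.exp_le_exp, sum_neg_distrib]; linarith [hm.1]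
      _ = _ := by rw [Real.exp_sub, Real.exp_log hlog]

end PE

section PF
open Finset

/-- block endpoints -/
noncomputable def vv (z : ℝ) (j : ℕ) : ℝ := z ^ ((1/2:ℝ)^j)

lemma vv_zero (z : ℝ) : vv z 0 = z := by simp [vv]

lemma vv_succ {z : ℝ} (hz : 0 ≤ z) (j : ℕ) : vv z (j+1) = Real.sqrt (vv z j) := by
  unfold vv
  rw [Real.sqrt_eq_rpow, ← Real.rpow_mul hz, pow_succ]

lemma vv_anti {z : ℝ} (hz : 1 ≤ z) : Antitone (vv z) := by
  intro i j hij
  unfold vv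
  apply Real.rpow_le_rpow_of_exponent_le hz
  exact pow_le_pow_of_le_one (by norm_num) (by norm_num) hij

lemma vv_pow {z : ℝ} (hz : 0 ≤ z) (j : ℕ) : vv z j ^ (2^j) = z := by
  unfold vv
  rw [← Real.rpow_natCast, ← Real.rpow_mul hz]
  push_cast
  rw [← mul_pow]; norm_num

lemma exists_t {w : ℝ} (hw : 4 ≤ w) {z : ℝ} (hz : 2 ≤ z) :
    ∃ t, vv z t ≤ w ∧ (∀ j < t, w < vv z j) ∧ (t : ℝ) + 1 ≤ z := by
  have hex : ∃ t, vv z t ≤ w := by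
    obtain ⟨n, hn⟩ := pow_unbounded_of_one_lt z (show 1 < w by linarith)
    refine ⟨n, ?_⟩
    by_contra hlt
    push Not at hlt
    have h1 : w ^ (2^n) ≤ vv z n ^ (2^n) := by gcongr
    rw [vv_pow (by linarith)] at h1
    have h2 : w ^ n ≤ w ^ (2^n) := pow_le_pow_right₀ (by linarith) (Nat.lt_two_pow_self).le
    linarith
  classical
  refine ⟨Nat.find hex, Nat.find_spec hex, fun j hj => not_le.1 (Nat.find_min hex hj), ?_⟩
  rcases Nat.eq_zero_or_pos (Nat.find hex) with h | h
  · rw [h]; push_cast; linarith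
  · obtain ⟨s, hs⟩ : ∃ s, Nat.find hex = s + 1 := ⟨Nat.find hex - 1, by omega⟩
    have h1 := not_le.1 (Nat.find_min hex (show s < Nat.find hex by omega))
    rw [hs]
    have h2 : (4:ℝ) ^ (2^s) ≤ vv z s ^ (2^s) := by
      have : 4 ≤ vv z s := by linarith
      gcongr
    rw [vv_pow (by linarith)] at h2
    have h3 : (4:ℝ) ^ (s+1) ≤ (4:ℝ)^(2^s) := pow_le_pow_right₀ (by norm_num) (Nat.lt_two_pow_self)
    have h4 : s + 1 + 1 ≤ 4 ^ (s+1) := Nat.lt_pow_self (by norm_num)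
    have h5 : ((s + 1 : ℕ):ℝ) + 1 ≤ 4 ^ (s+1) := by exact_mod_cast h4
    linarith

/-- blocks -/
noncomputable def TT (z : ℝ) (t j : ℕ) : Finset ℕ :=
  if j = t then PU (vv z t) else (PU (vv z j)).filter (fun p => vv z (j+1) < p)

/-- levels -/
def kk (K t j : ℕ) : ℕ := if j = t then 2 * K else 2 * j + 8

lemma vv_nonneg {z : ℝ} (hz : 0 ≤ z) (j : ℕ) : 0 ≤ vv z j := Real.rpow_nonneg hz _

lemma PU_eq {z : ℝ} (hz : 2 ≤ z) (t : ℕ) : PU z = (range (t+1)).biUnion (TT z t) := by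
  have h0 : 0 ≤ z := by linarith
  ext p
  rw [mem_biUnion]
  constructor
  · intro hp
    rw [mem_PU h0] at hp
    have : ∀ s, (p:ℝ) ≤ vv z s ∨ ∃ j < s, vv z (j+1) < p ∧ (p:ℝ) ≤ vv z j := by
      intro s
      induction s with
      | zero => left; rw [vv_zero]; exact hp.2
      | succ s ih =>
        rcases ih with h | ⟨j, hj, h⟩
        · by_cases hc : (p:ℝ) ≤ vv z (s+1)
          · exact Or.inl hc
          · exact Or.inr ⟨s, by omega, not_le.1 hc, h⟩
        · exact Or.inr ⟨j, by omega, h⟩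
    rcases this t with h | ⟨j, hj, h⟩
    · refine ⟨t, by simp, ?_⟩
      unfold TT
      rw [if_pos rfl, mem_PU (vv_nonneg h0 _)]
      exact ⟨hp.1, h⟩
    · refine ⟨j, by simp; omega, ?_⟩
      unfold TT
      rw [if_neg (by omega), mem_filter, mem_PU (vv_nonneg h0 _)]
      exact ⟨⟨hp.1, h.2⟩, h.1⟩
  · rintro ⟨j, hj, hp⟩
    rw [mem_PU h0]
    have hj' := vv_anti (show 1 ≤ z by linarith) (Nat.zero_le j)
    rw [vv_zero] at hj'
    unfold TT at hp
    split_ifs at hp with h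
    · rw [mem_PU (vv_nonneg h0 _), ← h] at hp
      exact ⟨hp.1, hp.2.trans hj'⟩
    · rw [mem_filter, mem_PU (vv_nonneg h0 _)] at hp
      exact ⟨hp.1.1, hp.1.2.trans hj'⟩

lemma TT_disj {z : ℝ} (hz : 2 ≤ z) (t : ℕ) :
    ∀ i ∈ range (t+1), ∀ j ∈ range (t+1), i ≠ j → Disjoint (TT z t i) (TT z t j) := by
  have h0 : 0 ≤ z := by linarith
  have key : ∀ i j, i < j → j ≤ t → Disjoint (TT z t i) (TT z t j) := by
    intro i j hij hj
    rw [Finset.disjoint_left]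
    intro p hpi hpj
    unfold TT at hpi hpj
    rw [if_neg (by omega), mem_filter] at hpi
    have h1 := vv_anti (show 1 ≤ z by linarith) (show i + 1 ≤ j from hij)
    have : (p:ℝ) ≤ vv z j := by
      split_ifs at hpj with h
      · rw [mem_PU (vv_nonneg h0 _), ← h] at hpj
        exact hpj.2
      · rw [mem_filter, mem_PU (vv_nonneg h0 _)] at hpj
        exact hpj.1.2
    linarith [hpi.2]
  intro i hi j hj hij
  rw [mem_range] at hi hj
  rcases lt_or_gt_of_ne hij with h | h
  · exact key i j h (by omega)
  · exact (key j i h (by omega)).symm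

lemma exp_four_le : Real.exp 4 ≤ 81 := by
  have h1 : Real.exp 1 ≤ 3 := by linarith [Real.exp_one_lt_d9]
  have : Real.exp 4 = (Real.exp 1)^4 := by rw [← Real.exp_nat_mul]; norm_num
  rw [this]
  calc (Real.exp 1)^4 ≤ 3^4 := by gcongr
    _ = 81 := by norm_num

lemma fact_bd (j : ℕ) : (2:ℝ)^(2*j+9) / ((2*j+9).factorial : ℝ) ≤ 1/700 * (1/2)^j := by
  induction j with
  | zero => norm_num [Nat.factorial]
  | succ j ih =>
    have h1 : (2*(j+1)+9).factorial = (2*j+11)*((2*j+10)*(2*j+9).factorial) := by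
      rw [show 2*(j+1)+9 = (2*j+9+1)+1 by ring, Nat.factorial_succ, Nat.factorial_succ]
    rw [h1, show 2*(j+1)+9 = (2*j+9)+2 by ring, pow_add]
    push_cast
    have hf : (0:ℝ) < ((2*j+9).factorial : ℝ) := by exact_mod_cast Nat.factorial_pos _
    have e : (2:ℝ)^(2*j+9) * 2^2 / ((2*(j:ℝ)+11)*((2*j+10)*((2*j+9).factorial : ℝ))) =
      (2:ℝ)^(2*j+9) / ((2*j+9).factorial : ℝ) * (4 / ((2*(j:ℝ)+11)*(2*j+10))) := by
      field_simp; norm_num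
    rw [e]
    have h2 : 4 / ((2*(j:ℝ)+11)*(2*j+10)) ≤ 1/2 := by
      have : (0:ℝ) ≤ j := by positivity
      rw [div_le_iff₀ (by positivity)]; nlinarith
    calc _ ≤ (1/700 * (1/2:ℝ)^j) * (1/2) := by
          apply mul_le_mul ih h2 (by positivity) (by positivity)
      _ = _ := by ring

lemma pu_card {w : ℝ} (hw : 0 ≤ w) : (PU w).card ≤ ⌊w⌋₊ := by
  unfold PU
  exact (card_filter_le _ _).trans (by simp)

lemma block_prime {z : ℝ} (hz : 2 ≤ z) {w : ℝ} (hw : 4 ≤ w) {t j : ℕ} (hj : j < t) (hv : w < vv z j) :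
    ∀ p ∈ TT z t j, p.Prime ∧ Real.sqrt (vv z j) < p ∧ (p:ℝ) ≤ vv z j ∧ p % 2 = 1 := by
  intro p hp
  unfold TT at hp
  rw [if_neg (by omega), mem_filter, mem_PU (vv_nonneg (by linarith) _), vv_succ (by linarith)] at hp
  refine ⟨hp.1.1, hp.2, hp.1.2, ?_⟩
  rcases hp.1.1.eq_two_or_odd with h | h
  · exfalso
    have h1 : (2:ℝ) ≤ Real.sqrt (vv z j) := by
      apply Real.le_sqrt_of_sq_le; linarith
    rw [h] at hp
    push_cast at hp
    linarith [hp.2]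
  · exact h

lemma block_card {z : ℝ} (hz : 2 ≤ z) {w : ℝ} (hw : 4 ≤ w) {t j : ℕ} (hj : j < t) (hv : w < vv z j) :
    1 + 2 * ((TT z t j).card : ℝ) ≤ vv z j := by
  have hb := block_prime hz hw hj hv
  have h1 : (TT z t j).card ≤ (Icc 1 ((⌊vv z j⌋₊ - 1)/2)).card := by
    apply card_le_card_of_injOn (fun p => p / 2)
    · intro p hp
      have h := hb p hp
      have h2 : p ≤ ⌊vv z j⌋₊ := Nat.le_floor h.2.2.1
      have := h.1.two_le
      simp only [coe_Icc, Set.mem_Icc]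
      omega
    · intro p hp q hq hpq
      have h := hb p hp
      have h' := hb q hq
      simp only at hpq
      omega
  rw [Nat.card_Icc] at h1
  have h2 : 1 ≤ ⌊vv z j⌋₊ := Nat.le_floor (by push_cast; linarith)
  have h3 : 1 + 2 * (TT z t j).card ≤ ⌊vv z j⌋₊ := by omega
  calc 1 + 2 * ((TT z t j).card : ℝ) ≤ (⌊vv z j⌋₊ : ℝ) := by exact_mod_cast h3
    _ ≤ _ := Nat.floor_le (by linarith)

lemma block_E {w : ℝ} (hw : 4 ≤ w)
    (hbl : ∀ u, w ≤ u → ∀ T : Finset ℕ, (∀ p∈T, p.Prime ∧ Real.sqrt u < p ∧ (p:ℝ) ≤ u) → ∑ p∈T, 1/(p:ℝ) ≤ 1)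
    {z : ℝ} (hz : 2 ≤ z) {t j : ℕ} (hj : j < t) (hv : w < vv z j) (a : ℕ) :
    pp (TT z t j) (dl (2*j+8+1)) (gg a) / ∏ p ∈ TT z t j, (1 - gg a p) ≤ 81 * (1/700 * (1/2)^j) := by
  have hb := block_prime hz hw hj hv
  have hs1 := hbl (vv z j) hv.le (TT z t j) (fun p hp => ⟨(hb p hp).1, (hb p hp).2.1, (hb p hp).2.2.1⟩)
  have hs : ∑ p ∈ TT z t j, gg a p ≤ 2 := by
    calc _ ≤ ∑ p ∈ TT z t j, 2 * (1/(p:ℝ)) := sum_le_sum fun p _ => gg_le_two_div a p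
      _ ≤ 2 := by rw [← mul_sum]; linarith
  have hs0 : 0 ≤ ∑ p ∈ TT z t j, gg a p := sum_nonneg fun p _ => gg_nonneg a p
  have hV : Real.exp (-4) ≤ ∏ p ∈ TT z t j, (1 - gg a p) := by
    calc Real.exp (-4) ≤ Real.exp (∑ p ∈ TT z t j, -(2 * gg a p)) := by
          rw [Real.exp_le_exp, sum_neg_distrib, ← mul_sum]; linarith
      _ ≤ _ := by
          rw [Real.exp_sum]
          refine prod_le_prod (fun p _ => (Real.exp_pos _).le) fun p hp => ?_
          have h1 := gg_le_half a (hb p hp).1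
          have h2 := gg_nonneg a p
          refine le_trans ?_ (one_sub_ge_exp h2 h1)
          rw [Real.exp_le_exp]
          nlinarith
  have hnum : pp (TT z t j) (dl (2*j+8+1)) (gg a) ≤ 1/700 * (1/2)^j := by
    refine (es_le _ _ (fun p _ => gg_nonneg a p) _).trans (le_trans ?_ (fact_bd j))
    gcongr
  have hVpos := (Real.exp_pos (-4)).trans_le hV
  rw [div_le_iff₀ hVpos]
  have h81 : 1 ≤ 81 * ∏ p ∈ TT z t j, (1 - gg a p) := by
    have h5 : Real.exp 4 * Real.exp (-4) = 1 := by rw [← Real.exp_add]; norm_num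
    nlinarith [exp_four_le, Real.exp_pos (-4)]
  have : (0:ℝ) ≤ 1/700 * (1/2)^j := by positivity
  nlinarith

lemma sum_exp (t : ℕ) : ∑ i ∈ range t, (2*(i:ℝ)+9) * (1/2)^i = 22 - (4*t+22) * (1/2)^t := by
  induction t with
  | zero => simp
  | succ t ih => rw [sum_range_succ, ih]; push_cast; ring

lemma prod_bd {z : ℝ} (hz : 2 ≤ z) {w : ℝ} (hw : 4 ≤ w) {t : ℕ} (hv : ∀ j < t, w < vv z j) :
    ∏ j ∈ range t, (1 + 2 * ((TT z t j).card : ℝ)) ^ (2*j+8+1) ≤ z ^ 22 := by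
  calc _ ≤ ∏ j ∈ range t, z ^ ((2*(j:ℝ)+9) * (1/2)^j) := by
        refine prod_le_prod (fun j _ => by positivity) fun j hj => ?_
        have h := block_card hz hw (mem_range.1 hj) (hv j (mem_range.1 hj))
        calc _ ≤ (vv z j) ^ (2*j+8+1) := by gcongr
          _ = _ := by
            unfold vv
            rw [← Real.rpow_natCast, ← Real.rpow_mul (by linarith)]
            congr 1; push_cast; ring
    _ = z ^ (22 - (4*(t:ℝ)+22) * (1/2)^t) := by
        rw [← Real.rpow_sum_of_pos (by linarith), sum_exp]
    _ ≤ z ^ (22:ℝ) := by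
        apply Real.rpow_le_rpow_of_exponent_le (by linarith)
        have : 0 ≤ (4*(t:ℝ)+22) * (1/2)^t := by positivity
        linarith
    _ = z ^ 22 := by exact_mod_cast Real.rpow_natCast z 22

lemma pp_le' (T : Finset ℕ) (c : ℕ → ℝ) (k m : ℕ) (hkm : k ≤ m) (hc : ∀ i, |c i| ≤ if i ≤ k then 1 else 0) :
    pp T (fun i => |c i|) (fun _ => 2) ≤ (1+2*(T.card:ℝ))^m := by
  refine (pp_abs_le T c k hc).trans (pow_le_pow_right₀ ?_ hkm)
  have : (0:ℝ) ≤ T.card := by positivity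
  linarith

lemma sieve_result : ∃ K : ℝ, 0 < K ∧ ∀ (x : ℝ) (a : ℕ) (z : ℝ), 0 ≤ x → 0 < a → 2 ≤ z →
    (x * (rho a / a)) * (∏ p ∈ PU z, (1 - gg a p)) / 2 - rho a * (K * z ^ 23)
      ≤ ∑ n ∈ (Icc 1 ⌊x⌋₊).filter (fun n => a ∣ n ^ 2 + 1), ∏ p ∈ PU z, (1 - bb a n p) ∧
    ∑ n ∈ (Icc 1 ⌊x⌋₊).filter (fun n => a ∣ n ^ 2 + 1), ∏ p ∈ PU z, (1 - bb a n p) ≤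
    2 * (x * (rho a / a)) * (∏ p ∈ PU z, (1 - gg a p)) + rho a * (K * z ^ 23) := by
  obtain ⟨w, hw, hbl⟩ := block_recip
  set B : ℝ := (1 + 2 * (⌊w⌋₊ : ℝ)) ^ (2 * ⌊w⌋₊ + 1) with hB
  have hBpos : 0 < B := by positivity
  refine ⟨4 * B, by positivity, ?_⟩
  intro x a z hx ha hz
  obtain ⟨t, ht, hv, htz⟩ := exists_t hw hz
  have hz0 : 0 ≤ z := by linarith
  have hcard : (TT z t t).card ≤ ⌊w⌋₊ := by
    unfold TT
    rw [if_pos rfl]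
    exact (pu_card (vv_nonneg hz0 _)).trans (Nat.floor_mono ht)
  have hpr : ∀ p ∈ PU z, p.Prime := fun p hp => (mem_filter.1 hp).2
  have hb : ∀ n, ∀ p, 0 ≤ bb a n p ∧ bb a n p ≤ 1 := by
    intro n p; unfold bb; split_ifs <;> norm_num
  have main := brun_hooley ((Icc 1 ⌊x⌋₊).filter (fun n => a ∣ n ^ 2 + 1)) (bb a) (gg a)
    (x * (rho a / a)) (2 * rho a) (PU z) (by positivity) (fun n _ p _ => hb n p)
    (fun p hp => ⟨gg_nonneg a p, by linarith [gg_le_half a (hpr p hp)]⟩)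
    (fun D hD => sieve_density x hx a ha D (fun p hp => hpr p (hD hp)))
    (TT z t) (kk ⌊w⌋₊ t) (range (t+1))
    (fun j _ => by
      unfold kk
      split_ifs
      · exact even_two_mul _
      · exact ⟨j+4, by ring⟩)
    (PU_eq hz t) (TT_disj hz t)
    (by
      rw [sum_range_succ]
      have h0 : pp (TT z t t) (dl (kk ⌊w⌋₊ t t + 1)) (gg a) = 0 := by
        apply es_eq_zero
        unfold kk
        rw [if_pos rfl]; omega
      rw [h0, zero_div, add_zero]
      calc _ ≤ ∑ j ∈ range t, 81 * (1/700 * (1/2:ℝ)^j) := by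
            refine sum_le_sum fun j hj => ?_
            have hj' := mem_range.1 hj
            have : kk ⌊w⌋₊ t j = 2*j+8 := by unfold kk; rw [if_neg (by omega)]
            rw [this]
            exact block_E hw hbl hz hj' (hv j hj') a
        _ = 81/700 * ∑ j ∈ range t, (1/2:ℝ)^j := by
            rw [mul_sum]; exact sum_congr rfl fun j _ => by ring
        _ ≤ 81/700 * 2 := by
            have := sum_geometric_two_le t
            gcongr
        _ ≤ 1/2 := by norm_num)
  have hprod : ∏ j ∈ range (t+1), (1 + 2 * ((TT z t j).card : ℝ)) ^ (kk ⌊w⌋₊ t j + 1) ≤ z^22 * B := by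
    rw [prod_range_succ]
    apply mul_le_mul
    · refine le_trans (le_of_eq (prod_congr rfl fun j hj => ?_)) (prod_bd hz hw hv)
      have hj' := mem_range.1 hj
      unfold kk
      rw [if_neg (by omega)]
    · unfold kk
      rw [if_pos rfl, hB]
      have : ((TT z t t).card : ℝ) ≤ ⌊w⌋₊ := by exact_mod_cast hcard
      gcongr
    · positivity
    · positivity
  have hA : ∏ j ∈ range (t+1), pp (TT z t j) (fun i => |yc (kk ⌊w⌋₊ t j) i|) (fun _ => 2) ≤ z^22 * B := by
    refine le_trans (prod_le_prod (fun j _ => pp_nonneg _ _ _ (fun _ => abs_nonneg _) (fun _ _ => by norm_num)) fun j _ => ?_) hprod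
    exact pp_le' _ _ _ _ (Nat.le_succ _) (yc_abs _)
  have hL : ∀ l ∈ range (t+1), ∏ j ∈ range (t+1), pp (TT z t j) (fun i => |(if j = l then dl (kk ⌊w⌋₊ t j+1) else yc (kk ⌊w⌋₊ t j)) i|) (fun _ => 2) ≤ z^22 * B := by
    intro l _
    refine le_trans (prod_le_prod (fun j _ => pp_nonneg _ _ _ (fun _ => abs_nonneg _) (fun _ _ => by norm_num)) fun j _ => ?_) hprod
    split_ifs
    · exact pp_le' _ _ _ _ le_rfl (dl_abs _)
    · exact pp_le' _ _ _ _ (Nat.le_succ _) (yc_abs _)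
  have hLs := sum_le_card_nsmul _ _ _ hL
  rw [card_range, nsmul_eq_mul] at hLs
  push_cast at hLs
  have hz22 : 0 < z^22 * B := by positivity
  have h5 : ((t:ℝ)+1) * (z^22*B) ≤ z^23 * B := by
    calc _ ≤ z * (z^22*B) := by gcongr
      _ = _ := by ring
  have h6 : z^22*B ≤ z^23*B := by
    calc z^22*B = 1 * (z^22*B) := by ring
      _ ≤ z * (z^22*B) := by gcongr; linarith
      _ = _ := by ring
  have hr : (0:ℝ) ≤ rho a := by positivity
  constructor
  · refine le_trans ?_ main.1
    apply sub_le_sub_left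
    calc _ ≤ 2 * (rho a:ℝ) * (z^23*B + z^23*B) := by
          apply mul_le_mul_of_nonneg_left _ (by positivity)
          linarith
      _ = _ := by ring
  · refine main.2.trans ?_
    apply add_le_add_right
    calc _ ≤ 2 * (rho a:ℝ) * (2 * (z^23*B)) := by
          apply mul_le_mul_of_nonneg_left _ (by positivity)
          have : 0 < z^23*B := by positivity
          linarith
      _ = _ := by ring

end PF


lemma W_eq (x : ℝ) (a : ℕ) (z : ℝ) (hz : 2 ≤ z)
    (P : ℕ → Prop) [DecidablePred P] (hP : ∀ n, P n ↔ a ∣ n ^ 2 + 1 ∧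
              ∀ p : ℕ, p.Prime → p ∣ (n ^ 2 + 1) / a → (p : ℝ) > z) :
    (((Finset.Icc 1 ⌊x⌋₊).filter P).card : ℝ) =
    ∑ n ∈ (Finset.Icc 1 ⌊x⌋₊).filter (fun n => a ∣ n ^ 2 + 1), ∏ p ∈ PU z, (1 - bb a n p) := by
  rw [Finset.card_filter, Finset.sum_filter]
  push_cast
  apply Finset.sum_congr rfl
  intro n _
  by_cases hd : a ∣ n ^ 2 + 1
  · rw [if_pos hd]
    by_cases hq : P n
    · rw [if_pos hq]
      symm
      apply Finset.prod_eq_one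
      intro p hp
      rw [mem_PU (by linarith)] at hp
      have : ¬ p ∣ (n^2+1)/a := fun h => by
        have := ((hP n).1 hq).2 p hp.1 h
        linarith [hp.2]
      simp [bb, this]
    · rw [if_neg hq]
      symm
      have h2 : ¬ ∀ p : ℕ, p.Prime → p ∣ (n ^ 2 + 1) / a → (p : ℝ) > z := fun h => hq ((hP n).2 ⟨hd, h⟩)
      push Not at h2
      obtain ⟨p, hp, hpd, hpz⟩ := h2
      apply Finset.prod_eq_zero ((mem_PU (by linarith)).2 ⟨hp, hpz⟩)
      simp [bb, hpd]
  · rw [if_neg hd, if_neg (fun h => hd ((hP n).1 h).1)]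

open scoped Classical

/-- **Lemma 3.3.** There exist `c, C > 0` such that for all sufficiently large `x`,
all integers `2 ≤ a ≤ x^(1/30)` with `a ∈ 𝓜` (i.e. `a` divides `n²+1` for some `n ≥ 1`)
and `P⁺(a) ≤ z`, and all reals `2 ≤ z ≤ x^(1/30)`, setting
`W_a(x,z) = #{n ≤ x : a ∣ n²+1 and P⁻((n²+1)/a) > z}`, one has
`c · 2^ω(a)·x/(φ(a)·log z) ≤ W_a(x,z) ≤ C · 2^ω(a)·x/(φ(a)·log z)`. -/
theorem lemma_W_asymp :
    ∃ c : ℝ, 0 < c ∧ ∃ C : ℝ, 0 < C ∧ ∃ x₀ : ℝ, ∀ x : ℝ, x ≥ x₀ →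
      ∀ a : ℕ, 2 ≤ a → (a : ℝ) ≤ x ^ ((1 : ℝ) / 30) →
      ∀ z : ℝ, 2 ≤ z → z ≤ x ^ ((1 : ℝ) / 30) →
      (∃ n : ℕ, 1 ≤ n ∧ a ∣ n ^ 2 + 1) →
      (∀ p : ℕ, p.Prime → p ∣ a → (p : ℝ) ≤ z) →
      c * (2 ^ a.primeFactors.card * x / (a.totient * Real.log z)) ≤
        (((Finset.Icc 1 ⌊x⌋₊).filter
            (fun n => a ∣ n ^ 2 + 1 ∧
              ∀ p : ℕ, p.Prime → p ∣ (n ^ 2 + 1) / a → (p : ℝ) > z)).card : ℝ) ∧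
      (((Finset.Icc 1 ⌊x⌋₊).filter
            (fun n => a ∣ n ^ 2 + 1 ∧
              ∀ p : ℕ, p.Prime → p ∣ (n ^ 2 + 1) / a → (p : ℝ) > z)).card : ℝ) ≤
        C * (2 ^ a.primeFactors.card * x / (a.totient * Real.log z)) := by
  obtain ⟨c1, hc1, c2, hc2, hV⟩ := V_bounds
  obtain ⟨K, hK, hS⟩ := sieve_result
  refine ⟨c1 / 8, by positivity, 2 * c2 + c1, by positivity, (max 1 (4 * K / c1)) ^ 30, ?_⟩
  intro x hx a ha hax z hz hzx hn hP
  rw [W_eq x a z hz _ (fun n => Iff.rfl)]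
  obtain ⟨n, _, hn⟩ := hn
  obtain ⟨h4, h3⟩ := M_cond hn
  have hm1 : (1:ℝ) ≤ max 1 (4 * K / c1) := le_max_left _ _
  have hx0 : 0 < x := lt_of_lt_of_le (by positivity) hx
  set y := x ^ ((1 : ℝ) / 30) with hy
  have hyx : y ^ 30 = x := by
    rw [hy, ← Real.rpow_natCast, ← Real.rpow_mul hx0.le]; norm_num
  have hy0 : 0 ≤ y := Real.rpow_nonneg hx0.le _
  have hmy : max 1 (4 * K / c1) ≤ y := by
    rw [ge_iff_le, ← hyx] at hx
    exact le_of_pow_le_pow_left₀ (by norm_num) hy0 hx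
  have hy1 : 1 ≤ y := hm1.trans hmy
  have hyK : 4 * K / c1 ≤ y := (le_max_right _ _).trans hmy
  have ha0 : 0 < a := by omega
  obtain ⟨hV1, hV2⟩ := hV a z ha0 hz h3 hP
  obtain ⟨hS1, hS2⟩ := hS x a z hx0.le ha0 hz
  have hrho := rho_two_pow ha0.ne' h4 h3
  set V := ∏ p ∈ PU z, (1 - gg a p) with hVd
  set L := Real.log z with hL
  have hL0 : 0 < L := Real.log_pos (by linarith)
  have hLz : L ≤ y := by
    have := Real.log_le_sub_one_of_pos (show 0 < z by linarith)
    linarith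
  have hphi : (0:ℝ) < a.totient := by exact_mod_cast Nat.totient_pos.2 ha0
  have hphia : (a.totient : ℝ) ≤ y := le_trans (by exact_mod_cast Nat.totient_le a) hax
  have haR : (0:ℝ) < a := by exact_mod_cast ha0
  set F : ℝ := (a.totient : ℝ) with hF
  set r : ℝ := (rho a : ℝ) with hr
  have hr0 : 0 ≤ r := by positivity
  have hw1 : r ≤ 2 ^ a.primeFactors.card := by
    have : rho a ≤ 2 ^ a.primeFactors.card := by rw [← hrho]; split_ifs <;> omega
    rw [hr]; exact_mod_cast this
  have hw2 : 2 ^ a.primeFactors.card ≤ 2 * r := by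
    have : 2 ^ a.primeFactors.card ≤ 2 * rho a := by rw [← hrho]; split_ifs <;> omega
    rw [hr]; exact_mod_cast this
  set Q : ℝ := r * x / (F * L) with hQ
  have hQ0 : 0 ≤ Q := by positivity
  set M : ℝ := 2 ^ a.primeFactors.card * x / (F * L) with hM
  have hM1 : Q ≤ M := by rw [hQ, hM]; gcongr
  have hM2 : M ≤ 2 * Q := by
    rw [hQ, hM, ← mul_div_assoc, ← mul_assoc]; gcongr
  have eXV : x * (r / a) * V = (r * x / F) * (V * (F / a)) := by field_simp
  have hX1 : c1 * Q ≤ x * (r / a) * V := by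
    rw [eXV]
    calc c1 * Q = (r * x / F) * (c1 / L) := by rw [hQ]; field_simp
      _ ≤ _ := by gcongr
  have hX2 : x * (r / a) * V ≤ c2 * Q := by
    rw [eXV]
    calc _ ≤ (r * x / F) * (c2 / L) := by gcongr
      _ = _ := by rw [hQ]; field_simp
  have herr : r * (K * z ^ 23) ≤ c1 / 4 * Q := by
    have e : c1 / 4 * Q = r * (c1 / 4 * x / (F * L)) := by rw [hQ]; ring
    rw [e]
    apply mul_le_mul_of_nonneg_left _ hr0
    rw [le_div_iff₀ (by positivity)]
    have hK4 : K ≤ c1 / 4 * y := by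
      rw [div_le_iff₀ hc1] at hyK; linarith
    calc K * z ^ 23 * (F * L) ≤ (c1 / 4 * y) * y ^ 23 * (y * y) := by gcongr
      _ = c1 / 4 * y ^ 26 := by ring
      _ ≤ c1 / 4 * y ^ 30 := by
          have := pow_le_pow_right₀ hy1 (show 26 ≤ 30 by norm_num)
          gcongr
      _ = _ := by rw [hyx]
  constructor
  · refine le_trans ?_ hS1
    nlinarith
  · refine hS2.trans ?_
    nlinarith
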